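/- arXiv:2504.21329 — 2 statements merged into one kernel-verified Lean document; each statement's English description precedes it below -/
import Mathlib

section
/- There exists a Reeb graph (G, h), a natural number k, and a drawing Γ of (G, h) such that: every vertex v has y-coordinate h(v) in Γ, every edge of Γ is an xy-monotone curve, Γ has exactly k crossings, and every drawing of (G, h) in which all edges are straight line segments has strictly more than k crossings. -/
open Set

/-- A drawing of a Reeb graph `(G, h)`: every vertex `v` is placed at the point
`(x v, h v)` in the plane (distinct vertices at distinct points), and every edge
`{v, w}` of `G` is drawn as the graph of a continuous function of the `y`-coordinate
over the height interval of its two endpoints; such a curve is a continuous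
`y`-monotone curve joining the images of the endpoints (it meets every horizontal
line in at most one point). -/
structure ReebDrawing {V : Type*} (G : SimpleGraph V) (h : V → ℝ) where
  /-- the `x`-coordinate of each vertex -/
  x : V → ℝ
  /-- distinct vertices are mapped to distinct points -/
  inj : Function.Injective fun v => ((x v, h v) : ℝ × ℝ)
  /-- for each edge, the `x`-coordinate of its curve as a function of the height `y` -/
  curve : Sym2 V → ℝ → ℝ
  curve_cont : ∀ e ∈ G.edgeSet, Continuous (curve e)
  curve_end : ∀ v w : V, G.Adj v w → curve s(v, w) (h v) = x v

namespace ReebDrawing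

variable {V : Type*} {G : SimpleGraph V} {h : V → ℝ}

/-- The point of the plane where the vertex `v` is drawn. -/
def pos (D : ReebDrawing G h) (v : V) : ℝ × ℝ := (D.x v, h v)

/-- The set of points of the curve drawn for the edge `{v, w}`. -/
def edgeCurve (D : ReebDrawing G h) (v w : V) : Set (ℝ × ℝ) :=
  {p | p.2 ∈ Set.uIcc (h v) (h w) ∧ p.1 = D.curve s(v, w) p.2}

/-- `p` is a crossing point of the two distinct edges `{v, w}` and `{v', w'}`:
it lies on both curves and is not the image of a shared endpoint. -/
def IsCrossing (D : ReebDrawing G h) (p : ℝ × ℝ) (v w v' w' : V) : Prop :=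
  G.Adj v w ∧ G.Adj v' w' ∧ s(v, w) ≠ s(v', w') ∧
    p ∈ D.edgeCurve v w ∧ p ∈ D.edgeCurve v' w' ∧
    ∀ u : V, (u = v ∨ u = w) → (u = v' ∨ u = w') → p ≠ D.pos u

/-- The set of crossings of a drawing: an unordered pair of (distinct) edges together
with a crossing point of these two edges. -/
def crossingSet (D : ReebDrawing G h) : Set (Sym2 (Sym2 V) × (ℝ × ℝ)) :=
  {q | ∃ v w v' w', q.1 = s(s(v, w), s(v', w')) ∧ D.IsCrossing q.2 v w v' w'}

/-- The number of crossings of a drawing, counted over all pairs of edges. -/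
noncomputable def numCrossings (D : ReebDrawing G h) : ℕ∞ := D.crossingSet.encard

/-- The crossings involving the fixed edge `e₀`: the other edge together with the
crossing point. -/
def edgeCrossings (D : ReebDrawing G h) (e₀ : Sym2 V) : Set (Sym2 V × (ℝ × ℝ)) :=
  {q | ∃ v w v' w', s(v, w) = e₀ ∧ q.1 = s(v', w') ∧ D.IsCrossing q.2 v w v' w'}

/-- The edge `{v, w}` is drawn as a straight line segment. -/
def Straight (D : ReebDrawing G h) (v w : V) : Prop :=
  ∀ y ∈ Set.uIcc (h v) (h w),
    D.curve s(v, w) y = D.x v + (y - h v) * (D.x w - D.x v) / (h w - h v)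

/-- The edge `{v, w}` is drawn as an `xy`-monotone curve: besides meeting every
horizontal line at most once (which holds by construction), it meets every vertical
line at most once. -/
def XYMonotone (D : ReebDrawing G h) (v w : V) : Prop :=
  Set.InjOn (D.curve s(v, w)) (Set.uIcc (h v) (h w))

/-- Edge `{v, w}` is (strictly) left of edge `{v', w'}`: at every height in the
interior of the common `y`-interval, the point of the first curve has strictly
smaller `x`-coordinate. -/
def LeftOf (D : ReebDrawing G h) (v w v' w' : V) : Prop :=
  ∀ y ∈ interior (Set.uIcc (h v) (h w) ∩ Set.uIcc (h v') (h w')),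
    D.curve s(v, w) y < D.curve s(v', w') y

end ReebDrawing

/-- The Reeb graph crossing number: the minimum number of crossings over all
drawings of `(G, h)`. -/
noncomputable def RGCN {V : Type*} (G : SimpleGraph V) (h : V → ℝ) : ℕ∞ :=
  ⨅ D : ReebDrawing G h, D.numCrossings

/-- The number of neighbours of `v` of strictly smaller height. -/
noncomputable def downDeg {V : Type*} (G : SimpleGraph V) (h : V → ℝ) (v : V) : ℕ :=
  {w | G.Adj v w ∧ h w < h v}.ncard

/-- The number of neighbours of `v` of strictly larger height. -/
noncomputable def upDeg {V : Type*} (G : SimpleGraph V) (h : V → ℝ) (v : V) : ℕ :=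
  {w | G.Adj v w ∧ h v < h w}.ncard

/-- A generic Reeb graph: all vertex heights are distinct, every vertex has degree
`1` or `3`, and every vertex has at most `2` lower and at most `2` higher neighbours. -/
def IsGenericReeb {V : Type*} (G : SimpleGraph V) (h : V → ℝ) : Prop :=
  Function.Injective h ∧
  (∀ v : V, (G.neighborSet v).ncard = 1 ∨ (G.neighborSet v).ncard = 3) ∧
  (∀ v : V, downDeg G h v ≤ 2 ∧ upDeg G h v ≤ 2)

/-- A subdivided Reeb graph: every edge joins vertices at consecutive levels (distinct
heights with no vertex height strictly in between), every vertex has degree at most `3`,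
with at most `2` lower and at most `2` higher neighbours. -/
def IsSubdividedReeb {V : Type*} (G : SimpleGraph V) (h : V → ℝ) : Prop :=
  (∀ v w : V, G.Adj v w → h v ≠ h w ∧
    ∀ u : V, h u ∉ Set.Ioo (min (h v) (h w)) (max (h v) (h w))) ∧
  (∀ v : V, (G.neighborSet v).ncard ≤ 3 ∧ downDeg G h v ≤ 2 ∧ upDeg G h v ≤ 2)

/-- `G` is the cycle graph on the enumeration `e` of its vertex set: adjacency holds
exactly between cyclically consecutive vertices. -/
def IsCycleEnum {V : Type*} {n : ℕ} (G : SimpleGraph V) (e : Fin n ≃ V) : Prop :=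
  ∀ i j : Fin n, G.Adj (e i) (e j) ↔ ((i.val + 1) % n = j.val ∨ (j.val + 1) % n = i.val)

/-- A caterpillar: a tree together with a central path (the spine) such that every
vertex is on the spine or adjacent to a spine vertex. -/
def IsCaterpillar {V : Type*} (G : SimpleGraph V) : Prop :=
  G.IsTree ∧ ∃ (n : ℕ) (s : Fin n → V),
    Function.Injective s ∧
    (∀ (i : ℕ) (hi : i + 1 < n), G.Adj (s ⟨i, Nat.lt_of_succ_lt hi⟩) (s ⟨i + 1, hi⟩)) ∧
    (∀ v : V, v ∈ Set.range s ∨ ∃ i : Fin n, G.Adj v (s i))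

namespace NonStretch

/-- The eight vertices of the example. -/
inductive Vx : Type
  | a : Vx
  | d : Vx
  | c : Bool → Vx
  | b : Bool → Vx
  | o : Bool → Vx
  deriving DecidableEq, Fintype

open Vx

/-- Upward oriented adjacency. -/
def up : Vx → Vx → Bool
  | a, b _ => true
  | c _, d => true
  | c _, o _ => true
  | o _, b _ => true
  | _, _ => false

/-- The graph. -/
def Gr : SimpleGraph Vx where
  Adj v w := up v w = true ∨ up w v = true
  symm := ⟨fun _ _ h => h.symm⟩
  loopless := ⟨fun v h => by cases v <;> simp [up] at h⟩

/-- The heights. -/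
noncomputable def ht : Vx → ℝ
  | a => 0
  | d => 6
  | c _ => 2
  | b _ => 4
  | o _ => 3

/-- Sign of a boolean. -/
noncomputable def sg : Bool → ℝ
  | true => 1
  | false => -1

/-- Curves with an orientation. -/
noncomputable def cv : Vx → Vx → ℝ → ℝ
  | a, b j => fun y => sg j * min y (3 - y / 2) + 2 * y
  | b j, a => fun y => sg j * min y (3 - y / 2) + 2 * y
  | c i, d => fun y => sg i * min (6 - y) (y / 2) + 2 * y
  | d, c i => fun y => sg i * min (6 - y) (y / 2) + 2 * y
  | c i, o k => fun y => sg i + (y - 2) * (sg k / 2 - sg i) + 2 * y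
  | o k, c i => fun y => sg i + (y - 2) * (sg k / 2 - sg i) + 2 * y
  | o k, b j => fun y => sg j + (4 - y) * (sg k / 2 - sg j) + 2 * y
  | b j, o k => fun y => sg j + (4 - y) * (sg k / 2 - sg j) + 2 * y
  | _, _ => fun _ => 0

lemma cv_symm (v w : Vx) : cv v w = cv w v := by
  cases v <;> cases w <;> rfl

lemma cv_cont (v w : Vx) : Continuous (cv v w) := by
  cases v <;> cases w <;> simp only [cv] <;> fun_prop

/-- The x-coordinates. -/
noncomputable def xx : Vx → ℝ
  | a => 0
  | d => 12
  | c i => sg i + 4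
  | b j => sg j + 8
  | o k => sg k / 2 + 6

lemma sg_inj {i j : Bool} (h : sg i = sg j) : i = j := by
  cases i <;> cases j <;> simp [sg] at h ⊢ <;> linarith

/-- The curved drawing. -/
noncomputable def Dr : ReebDrawing Gr ht where
  x := xx
  inj := by
    intro v w h
    simp only [Prod.mk.injEq] at h
    obtain ⟨h1, h2⟩ := h
    cases v <;> cases w <;> simp [ht, xx] at h1 h2 ⊢ <;>
      first
        | exact sg_inj h1
        | (norm_num at h2)
  curve := Sym2.lift ⟨cv, cv_symm⟩
  curve_cont := by
    intro e _
    induction e with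
    | _ v w => exact cv_cont v w
  curve_end := by
    intro v w h
    change cv v w (ht v) = xx v
    cases v <;> cases w <;> simp [Gr, up] at h <;> simp only [cv, ht, xx] <;> norm_num <;> ring

lemma min_strict (f g : ℝ → ℝ) (hf : StrictMono f) (hg : StrictMono g) :
    StrictMono fun y => min (f y) (g y) := fun _ _ h => min_lt_min (hf h) (hg h)

lemma cv_mono (v w : Vx) (h : up v w = true) : StrictMono (cv v w) := by
  intro y z hyz
  cases v <;> cases w <;> simp [up] at h <;> simp only [cv]
  case a.b j =>
    cases j <;> simp only [sg, min_def] <;> split_ifs <;> linarith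
  case c.d i =>
    cases i <;> simp only [sg, min_def] <;> split_ifs <;> linarith
  case c.o i k =>
    cases i <;> cases k <;> simp only [sg] <;> linarith
  case o.b k j =>
    cases j <;> cases k <;> simp only [sg] <;> linarith

lemma Dr_mono (v w : Vx) (h : Gr.Adj v w) : Dr.XYMonotone v w := by
  have : StrictMono (cv v w) := by
    rcases h with h | h
    · exact cv_mono v w h
    · rw [cv_symm]; exact cv_mono w v h
  exact this.injective.injOn

/-- The four crossings of the curved drawing. -/
noncomputable def S4 : Fin 4 → Sym2 (Sym2 Vx) × (ℝ × ℝ)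
  | 0 => (s(s(a, b true), s(c true, d)), (3 / 2 + 6, 3))
  | 1 => (s(s(a, b false), s(c false, d)), (-3 / 2 + 6, 3))
  | 2 => (s(s(c true, o false), s(c false, o true)), (16 / 3, 8 / 3))
  | 3 => (s(s(o true, b false), s(o false, b true)), (20 / 3, 10 / 3))

lemma up_lt {v w : Vx} (h : up v w = true) : ht v ≤ ht w := by
  cases v <;> cases w <;> simp [up] at h <;> norm_num [ht]

lemma cross_swap {V : Type*} {G : SimpleGraph V} {h : V → ℝ} (D : ReebDrawing G h)
    {p : ℝ × ℝ} {v w v' w' : V} (H : D.IsCrossing p v w v' w') : D.IsCrossing p w v v' w' := by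
  obtain ⟨h1, h2, h3, h4, h5, h6⟩ := H
  refine ⟨h1.symm, h2, by rwa [Sym2.eq_swap], ?_, h5, fun u hu => h6 u hu.symm⟩
  simpa [ReebDrawing.edgeCurve, Set.uIcc_comm (h w), Sym2.eq_swap (a := w)] using h4

lemma cross_comm {V : Type*} {G : SimpleGraph V} {h : V → ℝ} (D : ReebDrawing G h)
    {p : ℝ × ℝ} {v w v' w' : V} (H : D.IsCrossing p v w v' w') : D.IsCrossing p v' w' v w := by
  obtain ⟨h1, h2, h3, h4, h5, h6⟩ := H
  exact ⟨h2, h1, h3.symm, h5, h4, fun u hu hu' => h6 u hu' hu⟩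

set_option maxHeartbeats 4000000 in
/-- Which pairs of upward edges cross in `Dr`. -/
lemma Dr_cross_aux (x y : ℝ) (v w v' w' : Vx) (h : up v w = true) (h' : up v' w' = true)
    (hne : s(v, w) ≠ s(v', w')) (hy : ht v ≤ y ∧ y ≤ ht w) (hy' : ht v' ≤ y ∧ y ≤ ht w')
    (hx : x = cv v w y) (hx' : x = cv v' w' y)
    (hu : ∀ u : Vx, (u = v ∨ u = w) → (u = v' ∨ u = w') → ¬ (x = xx u ∧ y = ht u)) :
    ∃ n, (s(s(v, w), s(v', w')), (x, y)) = S4 n := by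
  obtain ⟨hy1, hy2⟩ := hy
  obtain ⟨hy3, hy4⟩ := hy'
  have fin : ∀ n : Fin 4, s(s(v, w), s(v', w')) = (S4 n).1 → x = (S4 n).2.1 → y = (S4 n).2.2 →
      ∃ n, (s(s(v, w), s(v', w')), (x, y)) = S4 n :=
    fun n h1 h2 h3 => ⟨n, Prod.ext h1 (Prod.ext h2 h3)⟩
  have hS0 : S4 0 = (s(s(a, b true), s(c true, d)), (3 / 2 + 6, 3)) := rfl
  have hS1 : S4 1 = (s(s(a, b false), s(c false, d)), (-3 / 2 + 6, 3)) := rfl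
  have hS2 : S4 2 = (s(s(c true, o false), s(c false, o true)), (16 / 3, 8 / 3)) := rfl
  have hS3 : S4 3 = (s(s(o true, b false), s(o false, b true)), (20 / 3, 10 / 3)) := rfl
  rcases v with _ | _ | i | i | i <;> rcases w with _ | _ | j | j | j <;>
    simp only [up, Bool.false_eq_true] at h <;>
    rcases v' with _ | _ | i' | i' | i' <;> rcases w' with _ | _ | j' | j' | j' <;>
    simp only [up, Bool.false_eq_true] at h' <;>
    (try cases i) <;> (try cases j) <;> (try cases i') <;> (try cases j') <;>
    simp only [cv, ht, sg, min_def] at hx hx' hy1 hy2 hy3 hy4 <;>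
    first
      | exact absurd rfl hne
      | (exfalso; (try split_ifs at hx hx') <;> linarith)
      | (exfalso; refine hu a (by simp) (by simp) ?_; simp only [xx, ht, sg]
         (try split_ifs at hx hx') <;> constructor <;> linarith)
      | (exfalso; refine hu d (by simp) (by simp) ?_; simp only [xx, ht, sg]
         (try split_ifs at hx hx') <;> constructor <;> linarith)
      | (exfalso; refine hu (c true) (by simp) (by simp) ?_; simp only [xx, ht, sg]
         (try split_ifs at hx hx') <;> constructor <;> linarith)
      | (exfalso; refine hu (c false) (by simp) (by simp) ?_; simp only [xx, ht, sg]
         (try split_ifs at hx hx') <;> constructor <;> linarith)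
      | (exfalso; refine hu (b true) (by simp) (by simp) ?_; simp only [xx, ht, sg]
         (try split_ifs at hx hx') <;> constructor <;> linarith)
      | (exfalso; refine hu (b false) (by simp) (by simp) ?_; simp only [xx, ht, sg]
         (try split_ifs at hx hx') <;> constructor <;> linarith)
      | (exfalso; refine hu (o true) (by simp) (by simp) ?_; simp only [xx, ht, sg]
         (try split_ifs at hx hx') <;> constructor <;> linarith)
      | (exfalso; refine hu (o false) (by simp) (by simp) ?_; simp only [xx, ht, sg]
         (try split_ifs at hx hx') <;> constructor <;> linarith)
      | (refine fin 0 (by first | (rw [hS0]; done) | (rw [hS0]; decide)) ?_ ?_ <;> rw [hS0] <;>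
          (try split_ifs at hx hx') <;> simp only <;> linarith)
      | (refine fin 1 (by first | (rw [hS1]; done) | (rw [hS1]; decide)) ?_ ?_ <;> rw [hS1] <;>
          (try split_ifs at hx hx') <;> simp only <;> linarith)
      | (refine fin 2 (by first | (rw [hS2]; done) | (rw [hS2]; decide)) ?_ ?_ <;> rw [hS2] <;>
          (try split_ifs at hx hx') <;> simp only <;> linarith)
      | (refine fin 3 (by first | (rw [hS3]; done) | (rw [hS3]; decide)) ?_ ?_ <;> rw [hS3] <;>
          (try split_ifs at hx hx') <;> simp only <;> linarith)

lemma Dr_le : Dr.numCrossings ≤ 4 := by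
  have hsub : Dr.crossingSet ⊆ Set.range S4 := by
    rintro ⟨q, x, y⟩ ⟨v, w, v', w', hq, H⟩
    simp only at hq H
    subst hq
    have key : ∀ v w v' w' : Vx, up v w = true → up v' w' = true →
        Dr.IsCrossing (x, y) v w v' w' →
        (s(s(v, w), s(v', w')), (x, y)) ∈ Set.range S4 := by
      intro v w v' w' h h' H
      obtain ⟨h1, h2, h3, ⟨h4, h4'⟩, ⟨h5, h5'⟩, h6⟩ := H
      rw [Set.uIcc_of_le (up_lt h)] at h4
      rw [Set.uIcc_of_le (up_lt h')] at h5
      obtain ⟨n, hn⟩ := Dr_cross_aux x y v w v' w' h h' h3 h4 h5 h4' h5'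
        (fun u hu hu' he => h6 u hu hu' (Prod.ext he.1 he.2))
      exact ⟨n, hn.symm⟩
    rcases H.1 with h | h <;> rcases H.2.1 with h' | h'
    · exact key _ _ _ _ h h' H
    · have := key _ _ _ _ h h' (cross_comm _ (cross_swap _ (cross_comm _ H)))
      rwa [Sym2.eq_swap (a := w')] at this
    · have := key _ _ _ _ h h' (cross_swap _ H)
      rwa [Sym2.eq_swap (a := w)] at this
    · have := key _ _ _ _ h h' (cross_swap _ (cross_comm _ (cross_swap _ (cross_comm _ H))))
      rwa [Sym2.eq_swap (a := w), Sym2.eq_swap (a := w')] at this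
  calc Dr.numCrossings ≤ (Set.range S4).encard := Set.encard_le_encard hsub
    _ ≤ (Set.univ : Set (Fin 4)).encard := by
        rw [← Set.image_univ]; exact Set.encard_image_le _ _
    _ = 4 := by simp [Set.encard_univ]

/-- Crossing criterion by the intermediate value theorem. -/
lemma cross_of_le {V : Type*} {G : SimpleGraph V} {h : V → ℝ} (D : ReebDrawing G h)
    {v w v' w' : V} (hA : G.Adj v w) (hB : G.Adj v' w')
    (h1 : v ≠ v') (h2 : v ≠ w') (h3 : w ≠ v') (h4 : w ≠ w') (y0 y1 : ℝ)
    (m0 : y0 ∈ Set.uIcc (h v) (h w)) (m1 : y1 ∈ Set.uIcc (h v) (h w))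
    (m0' : y0 ∈ Set.uIcc (h v') (h w')) (m1' : y1 ∈ Set.uIcc (h v') (h w'))
    (c0 : D.curve s(v, w) y0 ≤ D.curve s(v', w') y0)
    (c1 : D.curve s(v', w') y1 ≤ D.curve s(v, w) y1) :
    s(s(v, w), s(v', w')) ∈ (Set.image Prod.fst D.crossingSet) := by
  have k1 : Continuous (D.curve s(v, w)) := D.curve_cont _ hA
  have k2 : Continuous (D.curve s(v', w')) := D.curve_cont _ hB
  obtain ⟨y, hy, he⟩ : ∃ y ∈ Set.uIcc y0 y1,
      D.curve s(v', w') y - D.curve s(v, w) y = 0 := by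
    have := intermediate_value_uIcc (a := y0) (b := y1)
      (f := fun y => D.curve s(v', w') y - D.curve s(v, w) y) (k2.sub k1).continuousOn
    have h0 : (0 : ℝ) ∈ Set.uIcc (D.curve s(v', w') y0 - D.curve s(v, w) y0)
        (D.curve s(v', w') y1 - D.curve s(v, w) y1) :=
      Set.mem_uIcc.2 (Or.inr ⟨by linarith, by linarith⟩)
    exact this h0
  refine ⟨(s(s(v, w), s(v', w')), (D.curve s(v, w) y, y)), ⟨v, w, v', w', rfl, hA, hB, ?_,
    ⟨Set.uIcc_subset_uIcc m0 m1 hy, rfl⟩,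
    ⟨Set.uIcc_subset_uIcc m0' m1' hy, by simp only; linarith⟩, ?_⟩, rfl⟩
  · intro hs
    rcases Sym2.eq_iff.1 hs with ⟨r, _⟩ | ⟨r, _⟩
    · exact h1 r
    · exact h2 r
  · rintro u (rfl | rfl) (r | r)
    · exact absurd r h1
    · exact absurd r h2
    · exact absurd r h3
    · exact absurd r h4

/-- The long edges. -/
def lg : Bool → Bool → Sym2 Vx
  | true, j => s(a, b j)
  | false, i => s(c i, d)

/-- The end different from `o _` of a short edge. -/
def en : Bool → Bool → Vx
  | true, j => b j
  | false, i => c i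

lemma sh_ne_lg : ∀ k u j t i : Bool, s(o k, en u j) ≠ lg t i := by decide

lemma lg_ne : ∀ t i t' i' : Bool, ¬ (t = t' ∧ i = i') → lg t i ≠ lg t' i' := by decide

lemma sh_ne : ∀ u j u' j' : Bool, s(o true, en u j) ≠ s(o false, en u' j') := by decide

lemma base_ne : ∀ k k' : Bool, s(s(c true, o k), s(c false, o !k)) ≠
    s(s(o k', b true), s(o !k', b false)) := by decide

lemma lg_notin1 : ∀ k t i : Bool, lg t i ∉ s(s(c true, o k), s(c false, o !k)) := by
  intro k t i
  rw [Sym2.mem_iff, not_or]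
  revert k t i; decide

lemma lg_notin2 : ∀ k t i : Bool, lg t i ∉ s(s(o k, b true), s(o !k, b false)) := by
  intro k t i
  rw [Sym2.mem_iff, not_or]
  revert k t i; decide

lemma ne_of_notin {α : Type*} {l x : α} {p : Sym2 α} (h : l ∉ p) : p ≠ s(l, x) := by
  rintro rfl
  exact h (Sym2.mem_mk_left _ _)

lemma nodup0 (k k' t i t0 i0 t1 i1 t' i' : Bool) (X : Sym2 Vx) (h : ¬ (t = t' ∧ i = i'))
    (hX : lg t i ≠ X) :
    [s(s(c true, o k), s(c false, o !k)), s(s(o k', b true), s(o !k', b false)),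
      s(lg t i, s(o true, en t0 i0)), s(lg t i, s(o false, en t1 i1)),
      s(lg t' i', X)].Nodup := by
  have hl : lg t i ∉ s(lg t' i', X) := by
    rw [Sym2.mem_iff, not_or]
    exact ⟨lg_ne _ _ _ _ h, hX⟩
  simp only [List.nodup_cons, List.mem_cons, List.not_mem_nil, or_false, not_or,
    not_false_eq_true, List.nodup_nil, and_true]
  exact ⟨⟨base_ne k k', ne_of_notin (lg_notin1 _ _ _), ne_of_notin (lg_notin1 _ _ _),
    ne_of_notin (lg_notin1 _ _ _)⟩,
    ⟨ne_of_notin (lg_notin2 _ _ _), ne_of_notin (lg_notin2 _ _ _),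
      ne_of_notin (lg_notin2 _ _ _)⟩,
    ⟨fun e => sh_ne _ _ _ _ (Sym2.congr_right.1 e), (ne_of_notin hl).symm⟩,
    (ne_of_notin hl).symm⟩

lemma five {V : Type*} {G : SimpleGraph V} {h : V → ℝ} (D : ReebDrawing G h)
    (p1 p2 p3 p4 p5 : Sym2 (Sym2 V)) (hn : [p1, p2, p3, p4, p5].Nodup)
    (h1 : p1 ∈ (Set.image Prod.fst D.crossingSet)) (h2 : p2 ∈ Set.image Prod.fst D.crossingSet)
    (h3 : p3 ∈ (Set.image Prod.fst D.crossingSet)) (h4 : p4 ∈ Set.image Prod.fst D.crossingSet)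
    (h5 : p5 ∈ (Set.image Prod.fst D.crossingSet)) : 4 < D.numCrossings := by
  classical
  have hsub : (([p1, p2, p3, p4, p5].toFinset : Finset _) : Set (Sym2 (Sym2 V))) ⊆
      Set.image Prod.fst D.crossingSet := by
    intro q hq
    simp only [List.coe_toFinset, List.mem_cons, List.not_mem_nil, or_false,
      Set.mem_ofPred_eq] at hq
    rcases hq with rfl | rfl | rfl | rfl | rfl <;> assumption
  have hle := (Set.encard_le_encard hsub).trans (Set.encard_image_le _ _)
  rw [Set.encard_coe_eq_coe_finsetCard, List.toFinset_card_of_nodup hn] at hle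
  refine lt_of_lt_of_le ?_ hle
  norm_num

lemma straight_bound (D : ReebDrawing Gr ht) (hD : ∀ v w : Vx, Gr.Adj v w → D.Straight v w) :
    4 < D.numCrossings := by
  have lt_or : ∀ (f : Bool → Vx), (∀ i, ht (f i) = ht (f true)) → (f true ≠ f false) →
      ∃ i, D.x (f i) < D.x (f !i) := by
    intro f hf hne
    have hx : D.x (f true) ≠ D.x (f false) := by
      intro he
      exact hne (D.inj (Prod.ext he (hf false).symm))
    rcases lt_or_gt_of_ne hx with h | h
    · exact ⟨true, h⟩
    · exact ⟨false, h⟩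
  obtain ⟨i, hi⟩ := lt_or c (fun _ => rfl) (by decide)
  obtain ⟨j, hj⟩ := lt_or b (fun _ => rfl) (by decide)
  have adjab : ∀ j, Gr.Adj a (b j) := fun j => Or.inl rfl
  have adjcd : ∀ i, Gr.Adj (c i) d := fun j => Or.inl rfl
  have adjco : ∀ i k, Gr.Adj (c i) (o k) := fun _ _ => Or.inl rfl
  have adjob : ∀ k j, Gr.Adj (o k) (b j) := fun _ _ => Or.inl rfl
  -- values of curves at end points
  have ea : ∀ j, D.curve s(a, b j) 4 = D.x (b j) := fun j => by
    have := D.curve_end (b j) a (adjab j).symm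
    rwa [Sym2.eq_swap] at this
  have ec : ∀ i, D.curve s(c i, d) 2 = D.x (c i) := fun i => D.curve_end (c i) d (adjcd i)
  have eco : ∀ i k, D.curve s(o k, c i) 2 = D.x (c i) := fun i k => by
    have := D.curve_end (c i) (o k) (adjco i k)
    rwa [Sym2.eq_swap] at this
  have eco' : ∀ i k, D.curve s(o k, c i) 3 = D.x (o k) :=
    fun i k => D.curve_end (o k) (c i) (adjco i k).symm
  have eob : ∀ k j, D.curve s(o k, b j) 3 = D.x (o k) :=
    fun k j => D.curve_end (o k) (b j) (adjob k j)
  have eob' : ∀ k j, D.curve s(o k, b j) 4 = D.x (b j) := fun k j => by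
    have := D.curve_end (b j) (o k) (adjob k j).symm
    rwa [Sym2.eq_swap] at this
  -- straightness
  have se : ∀ j, D.curve s(a, b j) 2 = (D.x a + D.x (b j)) / 2 := fun j => by
    rw [hD a (b j) (adjab j) 2 (by simp only [ht]; rw [Set.mem_uIcc]; norm_num)]
    simp only [ht]; ring
  have sf : ∀ i, D.curve s(c i, d) 4 = (D.x d + D.x (c i)) / 2 := fun i => by
    rw [hD (c i) d (adjcd i) 4 (by simp only [ht]; rw [Set.mem_uIcc]; norm_num)]
    simp only [ht]; ring
  -- crossing of long edges with the stars, depending on the order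
  have e_ge : ∀ j i j' k, D.x (c i) ≤ D.curve s(a, b j) 2 → D.x (b j) < D.x (b j') →
      ∃ u l, s(lg true j, s(o k, en u l)) ∈ (Set.image Prod.fst D.crossingSet) := by
    intro j i j' k h1 h2
    rcases le_total (D.curve s(a, b j) 3) (D.x (o k)) with h3 | h3
    · refine ⟨false, i, cross_of_le D (v' := o k) (w' := c i) (adjab j)
        (adjco i k).symm (by simp) (by simp) (by simp)
        (by simp) 3 2 ?_ ?_ ?_ ?_ ?_ ?_⟩
      any_goals (simp only [ht]; rw [Set.mem_uIcc]; norm_num)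
      · rw [eco']; exact h3
      · rw [eco]; exact h1
    · refine ⟨true, j', cross_of_le D (v' := o k) (w' := b j') (adjab j)
        (adjob k j') (by simp) (by simp) (by simp)
        (by rintro ⟨⟩; exact lt_irrefl _ h2) 4 3 ?_ ?_ ?_ ?_ ?_ ?_⟩
      any_goals (simp only [ht]; rw [Set.mem_uIcc]; norm_num)
      · rw [eob', ea]; exact h2.le
      · rw [eob]; exact h3
  have e_le : ∀ j i j' k, D.curve s(a, b j) 2 ≤ D.x (c i) → D.x (b j') < D.x (b j) →
      ∃ u l, s(lg true j, s(o k, en u l)) ∈ (Set.image Prod.fst D.crossingSet) := by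
    intro j i j' k h1 h2
    rcases le_total (D.x (o k)) (D.curve s(a, b j) 3) with h3 | h3
    · refine ⟨false, i, cross_of_le D (v' := o k) (w' := c i) (adjab j)
        (adjco i k).symm (by simp) (by simp) (by simp)
        (by simp) 2 3 ?_ ?_ ?_ ?_ ?_ ?_⟩
      any_goals (simp only [ht]; rw [Set.mem_uIcc]; norm_num)
      · rw [eco]; exact h1
      · rw [eco']; exact h3
    · refine ⟨true, j', cross_of_le D (v' := o k) (w' := b j') (adjab j)
        (adjob k j') (by simp) (by simp) (by simp)
        (by rintro ⟨⟩; exact lt_irrefl _ h2) 3 4 ?_ ?_ ?_ ?_ ?_ ?_⟩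
      any_goals (simp only [ht]; rw [Set.mem_uIcc]; norm_num)
      · rw [eob]; exact h3
      · rw [eob', ea]; exact h2.le
  have f_ge : ∀ i j i' k, D.x (b j) ≤ D.curve s(c i, d) 4 → D.x (c i) < D.x (c i') →
      ∃ u l, s(lg false i, s(o k, en u l)) ∈ (Set.image Prod.fst D.crossingSet) := by
    intro i j i' k h1 h2
    rcases le_total (D.curve s(c i, d) 3) (D.x (o k)) with h3 | h3
    · refine ⟨true, j, cross_of_le D (v' := o k) (w' := b j) (adjcd i)
        (adjob k j) (by simp) (by simp) (by simp)
        (by simp) 3 4 ?_ ?_ ?_ ?_ ?_ ?_⟩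
      any_goals (simp only [ht]; rw [Set.mem_uIcc]; norm_num)
      · rw [eob]; exact h3
      · rw [eob']; exact h1
    · refine ⟨false, i', cross_of_le D (v' := o k) (w' := c i') (adjcd i)
        (adjco i' k).symm (by simp)
        (by rintro ⟨⟩; exact lt_irrefl _ h2) (by simp) (by simp) 2 3 ?_ ?_ ?_ ?_ ?_ ?_⟩
      any_goals (simp only [ht]; rw [Set.mem_uIcc]; norm_num)
      · rw [eco, ec]; exact h2.le
      · rw [eco']; exact h3
  have f_le : ∀ i j i' k, D.curve s(c i, d) 4 ≤ D.x (b j) → D.x (c i') < D.x (c i) →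
      ∃ u l, s(lg false i, s(o k, en u l)) ∈ (Set.image Prod.fst D.crossingSet) := by
    intro i j i' k h1 h2
    rcases le_total (D.x (o k)) (D.curve s(c i, d) 3) with h3 | h3
    · refine ⟨true, j, cross_of_le D (v' := o k) (w' := b j) (adjcd i)
        (adjob k j) (by simp) (by simp) (by simp)
        (by simp) 4 3 ?_ ?_ ?_ ?_ ?_ ?_⟩
      any_goals (simp only [ht]; rw [Set.mem_uIcc]; norm_num)
      · rw [eob']; exact h1
      · rw [eob]; exact h3
    · refine ⟨false, i', cross_of_le D (v' := o k) (w' := c i') (adjcd i)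
        (adjco i' k).symm (by simp)
        (by rintro ⟨⟩; exact lt_irrefl _ h2) (by simp) (by simp) 3 2 ?_ ?_ ?_ ?_ ?_ ?_⟩
      any_goals (simp only [ht]; rw [Set.mem_uIcc]; norm_num)
      · rw [eco']; exact h3
      · rw [eco, ec]; exact h2.le
  -- crossing of two long edges
  have ef_l : D.curve s(a, b j) 2 ≤ D.x (c i) → D.curve s(c i, d) 4 ≤ D.x (b j) →
      s(lg true j, lg false i) ∈ (Set.image Prod.fst D.crossingSet) := by
    intro h1 h2
    refine cross_of_le D (adjab j) (adjcd i) (by simp) (by simp) (by simp) (by simp)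
      2 4 ?_ ?_ ?_ ?_ ?_ ?_
    any_goals (simp only [ht]; rw [Set.mem_uIcc]; norm_num)
    · rw [ec]; exact h1
    · rw [ea]; exact h2
  have ef_r : D.x (c !i) ≤ D.curve s(a, b !j) 2 → D.x (b !j) ≤ D.curve s(c !i, d) 4 →
      s(lg true !j, lg false !i) ∈ (Set.image Prod.fst D.crossingSet) := by
    intro h1 h2
    refine cross_of_le D (adjab !j) (adjcd !i) (by simp) (by simp) (by simp) (by simp)
      4 2 ?_ ?_ ?_ ?_ ?_ ?_
    any_goals (simp only [ht]; rw [Set.mem_uIcc]; norm_num)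
    · rw [ea]; exact h2
    · rw [ec]; exact h1
  -- the two crossings inside the stars
  have eco2 : ∀ i k, D.curve s(c i, o k) 2 = D.x (c i) := fun i k => by
    rw [Sym2.eq_swap]; exact eco i k
  have eco3 : ∀ i k, D.curve s(c i, o k) 3 = D.x (o k) := fun i k => by
    rw [Sym2.eq_swap]; exact eco' i k
  obtain ⟨l, hl⟩ := lt_or o (fun _ => rfl) (by decide)
  obtain ⟨k, hk1⟩ : ∃ k, s(s(c true, o k), s(c false, o !k)) ∈ (Set.image Prod.fst D.crossingSet) := by
    rcases le_total (D.x (c true)) (D.x (c false)) with h1 | h1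
    · refine ⟨!l, cross_of_le D (adjco true (!l)) (adjco false (! !l)) (by simp) (by simp)
        (by simp) (by simp) 2 3 ?_ ?_ ?_ ?_ ?_ ?_⟩
      any_goals (simp only [ht]; rw [Set.mem_uIcc]; norm_num)
      · rw [eco2, eco2]; exact h1
      · rw [eco3, eco3, Bool.not_not]; exact hl.le
    · refine ⟨l, cross_of_le D (adjco true l) (adjco false (!l)) (by simp) (by simp)
        (by simp) (by simp) 3 2 ?_ ?_ ?_ ?_ ?_ ?_⟩
      any_goals (simp only [ht]; rw [Set.mem_uIcc]; norm_num)
      · rw [eco3, eco3]; exact hl.le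
      · rw [eco2, eco2]; exact h1
  obtain ⟨k', hk2⟩ : ∃ k, s(s(o k, b true), s(o !k, b false)) ∈ (Set.image Prod.fst D.crossingSet) := by
    rcases le_total (D.x (b true)) (D.x (b false)) with h1 | h1
    · refine ⟨!l, cross_of_le D (adjob (!l) true) (adjob (! !l) false) (by simp) (by simp)
        (by simp) (by simp) 4 3 ?_ ?_ ?_ ?_ ?_ ?_⟩
      any_goals (simp only [ht]; rw [Set.mem_uIcc]; norm_num)
      · rw [eob', eob']; exact h1
      · rw [eob, eob, Bool.not_not]; exact hl.le
    · refine ⟨l, cross_of_le D (adjob l true) (adjob (!l) false) (by simp) (by simp)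
        (by simp) (by simp) 3 4 ?_ ?_ ?_ ?_ ?_ ?_⟩
      any_goals (simp only [ht]; rw [Set.mem_uIcc]; norm_num)
      · rw [eob, eob]; exact hl.le
      · rw [eob', eob']; exact h1
  -- conclusion, in terms of a bad edge
  have concl : ∀ t l t' l', ¬ (t = t' ∧ l = l') →
      (∀ k, ∃ u m, s(lg t l, s(o k, en u m)) ∈ (Set.image Prod.fst D.crossingSet)) →
      (∃ X, lg t l ≠ X ∧ s(lg t' l', X) ∈ (Set.image Prod.fst D.crossingSet)) → 4 < D.numCrossings := by
    rintro t l t' l' hne hb ⟨X, hX, hc⟩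
    obtain ⟨u0, m0, h0⟩ := hb true
    obtain ⟨u1, m1, h1⟩ := hb false
    exact five D _ _ _ _ _ (nodup0 k k' t l u0 m0 u1 m1 t' l' X hne hX) hk1 hk2 h0 h1 hc
  have right : ∀ t l, ¬ (t = true ∧ l = !j) → ¬ (t = false ∧ l = !i) →
      (∀ k, ∃ u m, s(lg t l, s(o k, en u m)) ∈ (Set.image Prod.fst D.crossingSet)) →
      4 < D.numCrossings := by
    intro t l n1 n2 hb
    rcases le_total (D.curve s(a, b !j) 2) (D.x (c !i)) with h1 | h1
    · obtain ⟨u, m, hc⟩ := e_le (!j) (!i) j true h1 hj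
      exact concl t l true (!j) n1 hb ⟨_, (sh_ne_lg _ _ _ _ _).symm, hc⟩
    rcases le_total (D.curve s(c !i, d) 4) (D.x (b !j)) with h2 | h2
    · obtain ⟨u, m, hc⟩ := f_le (!i) (!j) i true h2 hi
      exact concl t l false (!i) n2 hb ⟨_, (sh_ne_lg _ _ _ _ _).symm, hc⟩
    exact concl t l true (!j) n1 hb ⟨_, lg_ne _ _ _ _ n2, ef_r h1 h2⟩
  have left : ∀ t l, ¬ (t = true ∧ l = j) → ¬ (t = false ∧ l = i) →
      (∀ k, ∃ u m, s(lg t l, s(o k, en u m)) ∈ (Set.image Prod.fst D.crossingSet)) →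
      4 < D.numCrossings := by
    intro t l n1 n2 hb
    rcases le_total (D.x (c i)) (D.curve s(a, b j) 2) with h1 | h1
    · obtain ⟨u, m, hc⟩ := e_ge j i (!j) true h1 hj
      exact concl t l true j n1 hb ⟨_, (sh_ne_lg _ _ _ _ _).symm, hc⟩
    rcases le_total (D.x (b j)) (D.curve s(c i, d) 4) with h2 | h2
    · obtain ⟨u, m, hc⟩ := f_ge i j (!i) true h2 hi
      exact concl t l false i n2 hb ⟨_, (sh_ne_lg _ _ _ _ _).symm, hc⟩
    exact concl t l true j n1 hb ⟨_, lg_ne _ _ _ _ n2, ef_l h1 h2⟩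
  rcases le_or_gt (D.x (c i)) (D.curve s(a, b j) 2) with h1 | h1
  · exact right true j (by simp) (by simp) (fun k => e_ge j i (!j) k h1 hj)
  rcases le_or_gt (D.x (b j)) (D.curve s(c i, d) 4) with h2 | h2
  · exact right false i (by simp) (by simp) (fun k => f_ge i j (!i) k h2 hi)
  rcases le_or_gt (D.curve s(a, b !j) 2) (D.x (c !i)) with h3 | h3
  · exact left true (!j) (by simp) (by simp) (fun k => e_le (!j) (!i) j k h3 hj)
  rcases le_or_gt (D.curve s(c !i, d) 4) (D.x (b !j)) with h4 | h4
  · exact left false (!i) (by simp) (by simp) (fun k => f_le (!i) (!j) i k h4 hi)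
  rw [se] at h1 h3
  rw [sf] at h2 h4
  linarith

end NonStretch

/-- There exist a Reeb graph `(G, h)`, a natural number `k`, and a
drawing `Γ` of `(G, h)` such that every edge of `Γ` is an `xy`-monotone curve (every
vertex lies at `y`-coordinate `h v` by definition of a drawing), `Γ` has exactly `k`
crossings, and every drawing of `(G, h)` in which all edges are straight line segments
has strictly more than `k` crossings. -/
theorem exists_nonstretchable_reeb_drawing :
    ∃ (V : Type) (_ : Fintype V) (G : SimpleGraph V) (h : V → ℝ) (k : ℕ)
      (D : ReebDrawing G h),
      (∀ v w : V, G.Adj v w → D.XYMonotone v w) ∧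
      D.numCrossings = (k : ℕ∞) ∧
      ∀ D' : ReebDrawing G h, (∀ v w : V, G.Adj v w → D'.Straight v w) →
        (k : ℕ∞) < D'.numCrossings := by
  classical
  refine ⟨NonStretch.Vx, inferInstance, NonStretch.Gr, NonStretch.ht,
    NonStretch.Dr.numCrossings.toNat, NonStretch.Dr, NonStretch.Dr_mono, ?_, ?_⟩
  · refine (ENat.natCast_toNat ?_).symm
    exact ne_top_of_le_ne_top (by simp) NonStretch.Dr_le
  · intro D' hD'
    refine lt_of_le_of_lt ?_ (NonStretch.straight_bound D' hD')
    rw [ENat.natCast_toNat (ne_top_of_le_ne_top (by simp) NonStretch.Dr_le)]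
    exact NonStretch.Dr_le
end

section
/- Let (G, h) be a Reeb graph such that G is a cycle, and let k be the top-down iteration number of the cycle with respect to h. Then there exists a drawing of (G, h) with exactly k − 1 crossings. -/
open Set

/-- The `m`-th vertex of the cyclic enumeration `e`, with indices taken modulo `n`. -/
def cycVert {V : Type*} {n : ℕ} (hn : 0 < n) (e : Fin n ≃ V) (m : ℕ) : V :=
  e ⟨m % n, Nat.mod_lt m hn⟩


namespace ReebFold

/-- tent function of width `ε` -/
noncomputable def tent (ε s : ℝ) : ℝ := max 0 (1 - |s| / ε)

lemma tent_cont (ε : ℝ) : Continuous (tent ε) := by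
  unfold tent; fun_prop

lemma tent_zero (ε : ℝ) : tent ε 0 = 1 := by simp [tent]

lemma tent_far {ε s : ℝ} (hε : 0 < ε) (hs : ε ≤ |s|) : tent ε s = 0 := by
  unfold tent
  apply max_eq_left
  have : 1 ≤ |s| / ε := by rwa [le_div_iff₀ hε, one_mul]
  linarith

lemma tent_near {ε s : ℝ} (hε : 0 < ε) (hs : |s| < ε) :
    tent ε s = 1 - |s| / ε ∧ 0 < tent ε s ∧ tent ε s ≤ 1 := by
  have h1 : |s| / ε < 1 := by rwa [div_lt_one hε]
  have h2 : 0 ≤ |s| / ε := by positivity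
  have : tent ε s = 1 - |s| / ε := by
    unfold tent; apply max_eq_right; linarith
  refine ⟨this, ?_, ?_⟩ <;> rw [this] <;> linarith

lemma exists_gap {V : Type*} [Fintype V] (h : V → ℝ) :
    ∃ ε : ℝ, 0 < ε ∧ ∀ u v, h u ≠ h v → 2 * ε < |h u - h v| := by
  classical
  have hfin : ({d : ℝ | ∃ u v, h u ≠ h v ∧ d = |h u - h v|}).Finite := by
    apply (Set.finite_range (fun p : V × V => |h p.1 - h p.2|)).subset
    rintro d ⟨u, v, -, rfl⟩
    exact ⟨(u, v), rfl⟩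
  have hpos : ∀ d ∈ {d : ℝ | ∃ u v, h u ≠ h v ∧ d = |h u - h v|}, 0 < d := by
    rintro d ⟨u, v, huv, rfl⟩
    exact abs_pos.mpr (sub_ne_zero.mpr huv)
  rcases ({d : ℝ | ∃ u v, h u ≠ h v ∧ d = |h u - h v|}).eq_empty_or_nonempty with he | hne
  · refine ⟨1, one_pos, fun u v huv => ?_⟩
    have : |h u - h v| ∈ {d : ℝ | ∃ u v, h u ≠ h v ∧ d = |h u - h v|} := ⟨u, v, huv, rfl⟩
    rw [he] at this; exact this.elim
  · obtain ⟨d, hd, hmin⟩ := hfin.exists_minimal hne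
    have hd0 := hpos d hd
    refine ⟨d / 3, by positivity, fun u v huv => ?_⟩
    have hm : |h u - h v| ∈ {d : ℝ | ∃ u v, h u ≠ h v ∧ d = |h u - h v|} := ⟨u, v, huv, rfl⟩
    have : d ≤ |h u - h v| := by
      rcases le_total d (|h u - h v|) with h1 | h1
      · exact h1
      · exact hmin hm h1
    linarith

open Classical in
/-- the curve of the edge `e` running mostly in column `m e` -/
noncomputable def crv {V : Type*} [Fintype V] (h : V → ℝ) (m : Sym2 V → ℝ) (x : V → ℝ) (ε : ℝ)
    (e : Sym2 V) (y : ℝ) : ℝ :=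
  m e + ∑ v, if v ∈ e then (x v - m e) * tent ε (y - h v) else 0

lemma crv_eq {V : Type*} [Fintype V] (h : V → ℝ) (m : Sym2 V → ℝ) (x : V → ℝ) (ε : ℝ)
    (v w : V) (hvw : v ≠ w) (y : ℝ) :
    crv h m x ε s(v, w) y = m s(v, w) + (x v - m s(v, w)) * tent ε (y - h v)
      + (x w - m s(v, w)) * tent ε (y - h w) := by
  classical
  unfold crv
  rw [add_assoc]
  congr 1
  rw [← Finset.sum_filter]
  have : (Finset.univ.filter fun a => a ∈ s(v, w)) = {v, w} := by
    ext a; simp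
  rw [this, Finset.sum_pair hvw]

lemma crv_cont {V : Type*} [Fintype V] (h : V → ℝ) (m : Sym2 V → ℝ) (x : V → ℝ) (ε : ℝ)
    (e : Sym2 V) : Continuous (crv h m x ε e) := by
  classical
  unfold crv
  refine continuous_const.add (continuous_finsetSum _ fun v _ => ?_)
  split_ifs
  · exact continuous_const.mul ((tent_cont ε).comp (continuous_id.sub continuous_const))
  · exact continuous_const

/-- the drawing given by columns `m` and vertex positions `x` -/
noncomputable def drawing {V : Type*} [Fintype V] (G : SimpleGraph V) (h : V → ℝ)
    (hne : ∀ v w : V, G.Adj v w → h v ≠ h w) (m : Sym2 V → ℝ) (x : V → ℝ) (ε : ℝ) (hε : 0 < ε)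
    (hgap : ∀ u v, h u ≠ h v → 2 * ε < |h u - h v|)
    (hinj : ∀ v v', v ≠ v' → h v = h v' → x v ≠ x v') : ReebDrawing G h where
  x := x
  inj := by
    intro v v' hvv
    by_contra hc
    simp only [Prod.mk.injEq] at hvv
    exact hinj v v' hc hvv.2 hvv.1
  curve := crv h m x ε
  curve_cont := fun e _ => crv_cont h m x ε e
  curve_end := by
    intro v w hvw
    have h1 := hgap v w (hne v w hvw)
    rw [crv_eq h m x ε v w hvw.ne, sub_self, tent_zero, tent_far hε (by linarith)]
    ring

/-- behaviour of a curve near a level -/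
lemma crv_level {V : Type*} [Fintype V] (h : V → ℝ) (m : Sym2 V → ℝ) (x : V → ℝ) {ε : ℝ}
    (hε : 0 < ε) (hgap : ∀ u v, h u ≠ h v → 2 * ε < |h u - h v|)
    (v w u : V) (hvw : h v ≠ h w) (y : ℝ) (hy : y ∈ Set.uIcc (h v) (h w)) (hu : |y - h u| < ε) :
    (∃ v' w', s(v', w') = s(v, w) ∧ h v' = h u ∧
      crv h m x ε s(v, w) y = (1 - tent ε (y - h u)) * m s(v, w) + tent ε (y - h u) * x v') ∨
    (min (h v) (h w) < h u ∧ h u < max (h v) (h w) ∧ crv h m x ε s(v, w) y = m s(v, w)) := by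
  have hvw' : v ≠ w := fun hh => hvw (by rw [hh])
  have far : ∀ a, h a ≠ h u → tent ε (y - h a) = 0 := by
    intro a ha
    apply tent_far hε
    have h1 := hgap a u ha
    have h2 : |h a - h u| ≤ |y - h a| + |y - h u| := by
      have := abs_sub_abs_le_abs_sub (y - h a) (y - h u)
      have h3 := abs_sub (y - h u) (y - h a)
      have h4 : (y - h u) - (y - h a) = h a - h u := by ring
      rw [h4] at h3
      linarith
    linarith
  have e1 := crv_eq h m x ε v w hvw' y
  by_cases h1 : h v = h u
  · left
    refine ⟨v, w, rfl, h1, ?_⟩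
    rw [e1, far w (by rw [← h1]; exact hvw.symm), h1]; ring
  by_cases h2 : h w = h u
  · left
    refine ⟨w, v, Sym2.eq_swap, h2, ?_⟩
    rw [e1, far v h1, h2]; ring
  right
  have g1 := hgap v u h1
  have g2 := hgap w u h2
  rw [Set.mem_uIcc] at hy
  rw [abs_lt] at hu
  rw [lt_abs] at g1 g2
  refine ⟨?_, ?_, ?_⟩
  · rw [min_lt_iff]
    by_contra hc
    push Not at hc
    rcases hy with hy | hy <;> rcases g1 with g1 | g1 <;> rcases g2 with g2 | g2 <;> linarith
  · rw [lt_max_iff]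
    by_contra hc
    push Not at hc
    rcases hy with hy | hy <;> rcases g1 with g1 | g1 <;> rcases g2 with g2 | g2 <;> linarith
  · rw [e1, far v h1, far w h2]; ring

lemma crv_mid {V : Type*} [Fintype V] (h : V → ℝ) (m : Sym2 V → ℝ) (x : V → ℝ) {ε : ℝ}
    (hε : 0 < ε) (v w : V) (hvw : v ≠ w) (y : ℝ) (hu : ∀ u, ε ≤ |y - h u|) :
    crv h m x ε s(v, w) y = m s(v, w) := by
  rw [crv_eq h m x ε v w hvw, tent_far hε (hu v), tent_far hε (hu w)]; ring

lemma sign_contra {l a c : ℝ} (hl0 : 0 < l) (hl1 : l ≤ 1) (hac : 0 < a * c)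
    (h : (1 - l) * a + l * c = 0) : False := by
  have : (1 - l) * (a * a) + l * (a * c) = 0 := by linear_combination a * h
  have h1 : 0 ≤ (1 - l) * (a * a) := mul_nonneg (by linarith) (mul_self_nonneg a)
  have h2 : 0 < l * (a * c) := mul_pos hl0 hac
  linarith

lemma isCrossing_congr {V : Type*} {G : SimpleGraph V} {h : V → ℝ} (D : ReebDrawing G h)
    {p : ℝ × ℝ} {v w v' w' a c a' c' : V} (e1 : s(v, w) = s(a, c)) (e2 : s(v', w') = s(a', c'))
    (hc : D.IsCrossing p v w v' w') : D.IsCrossing p a c a' c' := by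
  have key1 : ∀ {v w v' w' : V}, D.IsCrossing p v w v' w' → D.IsCrossing p w v v' w' := by
    rintro v w v' w' ⟨h1, h2, h3, h4, h5, h6⟩
    refine ⟨h1.symm, h2, by rwa [Sym2.eq_swap], ?_, h5, fun u hu => h6 u hu.symm⟩
    have e : s(w, v) = s(v, w) := Sym2.eq_swap
    unfold ReebDrawing.edgeCurve at h4 ⊢
    rw [e, Set.uIcc_comm]; exact h4
  have key2 : ∀ {v w v' w' : V}, D.IsCrossing p v w v' w' → D.IsCrossing p v w w' v' := by
    rintro v w v' w' ⟨h1, h2, h3, h4, h5, h6⟩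
    have e : s(w', v') = s(v', w') := Sym2.eq_swap
    refine ⟨h1, h2.symm, by rwa [e], h4, ?_, fun u hu hu' => h6 u hu hu'.symm⟩
    unfold ReebDrawing.edgeCurve at h5 ⊢
    rw [e, Set.uIcc_comm]; exact h5
  rw [Sym2.eq_iff] at e1 e2
  rcases e1 with ⟨rfl, rfl⟩ | ⟨rfl, rfl⟩ <;> rcases e2 with ⟨rfl, rfl⟩ | ⟨rfl, rfl⟩
  · exact hc
  · exact key2 hc
  · exact key1 hc
  · exact key1 (key2 hc)

lemma isCrossing_symm {V : Type*} {G : SimpleGraph V} {h : V → ℝ} (D : ReebDrawing G h)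
    {p : ℝ × ℝ} {v w v' w' : V}
    (hc : D.IsCrossing p v w v' w') : D.IsCrossing p v' w' v w := by
  obtain ⟨h1, h2, h3, h4, h5, h6⟩ := hc
  exact ⟨h2, h1, h3.symm, h5, h4, fun u hu hu' => h6 u hu' hu⟩

theorem geom {V : Type*} [Fintype V] (G : SimpleGraph V) (h : V → ℝ)
    (hne : ∀ v w : V, G.Adj v w → h v ≠ h w) (t : ℝ) (htmax : ∀ v, h v ≤ t)
    (m : Sym2 V → ℝ) (x : V → ℝ) (R : Set (Sym2 (Sym2 V)))
    (hinj : ∀ v v', v ≠ v' → h v = h v' → x v ≠ x v')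
    (ha : ∀ v w v' w', G.Adj v w → G.Adj v' w' → s(v, w) ≠ s(v', w') → m s(v, w) ≠ m s(v', w'))
    (hb : ∀ v w v' w', G.Adj v w → G.Adj v' w' → s(v, w) ≠ s(v', w') → v ≠ v' → h v = h v' →
      0 < (m s(v, w) - m s(v', w')) * (x v - x v') ∨ s(s(v, w), s(v', w')) ∈ R)
    (hc : ∀ v w v' w', G.Adj v w → G.Adj v' w' → s(v, w) ≠ s(v', w') →
      min (h v') (h w') < h v → h v < max (h v') (h w') →
      0 < (m s(v, w) - m s(v', w')) * (x v - m s(v', w')))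
    (hR : ∀ v w v' w', G.Adj v w → G.Adj v' w' → s(v, w) ≠ s(v', w') → v ≠ v' → h v = h v' →
      s(s(v, w), s(v', w')) ∈ R → h v = t ∨ 0 < (m s(v, w) - m s(v', w')) * (x v - x v'))
    (hR2 : ∀ q ∈ R, ∃ v w v' w', G.Adj v w ∧ G.Adj v' w' ∧ s(v, w) ≠ s(v', w') ∧ v ≠ v' ∧
      h v = t ∧ h v' = t ∧ q = s(s(v, w), s(v', w')) ∧
      (m s(v, w) - m s(v', w')) * (x v - x v') < 0) :
    ∃ D : ReebDrawing G h, D.numCrossings = R.encard := by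
  obtain ⟨ε, hε, hgap⟩ := exists_gap h
  set D := drawing G h hne m x ε hε hgap hinj with hD
  have hDx : D.x = x := rfl
  have hDc : D.curve = crv h m x ε := rfl
  -- main analysis of a crossing
  have main : ∀ p v w v' w', D.IsCrossing p v w v' w' →
      s(s(v, w), s(v', w')) ∈ R ∧ ∃ a c a' c', s(a, c) = s(v, w) ∧ s(a', c') = s(v', w') ∧
        h a = t ∧ h a' = t ∧ |p.2 - t| < ε ∧
        p.1 = (1 - tent ε (p.2 - t)) * m s(v, w) + tent ε (p.2 - t) * x a ∧
        p.1 = (1 - tent ε (p.2 - t)) * m s(v', w') + tent ε (p.2 - t) * x a' := by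
    rintro ⟨px, y⟩ v w v' w' hcr
    have hcr0 := hcr
    obtain ⟨h1, h2, h3, ⟨h4, h4'⟩, ⟨h5, h5'⟩, h6⟩ := hcr
    simp only [hDc] at h4 h4' h5 h5'
    have hm := ha v w v' w' h1 h2 h3
    by_cases hlev : ∃ u, |y - h u| < ε
    swap
    · push Not at hlev
      rw [crv_mid h m x hε v w h1.ne y hlev] at h4'
      rw [crv_mid h m x hε v' w' h2.ne y hlev] at h5'
      exact (hm (h4'.symm.trans h5')).elim
    obtain ⟨u, hu⟩ := hlev
    obtain ⟨-, hl0, hl1⟩ := tent_near hε hu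
    rcases crv_level h m x hε hgap v w u (hne _ _ h1) y h4 hu with
      ⟨a, c, eac, hau, hcv⟩ | ⟨hlo, hhi, hcv⟩
    · have hac : G.Adj a c := by
        have : s(a, c) ∈ G.edgeSet := by rw [eac]; exact h1
        exact this
      rcases crv_level h m x hε hgap v' w' u (hne _ _ h2) y h5 hu with
        ⟨a', c', eac', hau', hcv'⟩ | ⟨hlo, hhi, hcv'⟩
      · have hac' : G.Adj a' c' := by
          have : s(a', c') ∈ G.edgeSet := by rw [eac']; exact h2
          exact this
        have hcr1 := isCrossing_congr D eac.symm eac'.symm hcr0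
        obtain ⟨-, -, -, -, -, h6⟩ := hcr1
        by_cases haa : a = a'
        · exfalso
          subst haa
          have h7 := h6 a (Or.inl rfl) (Or.inl rfl)
          rw [hcv] at h4'
          rw [hcv'] at h5'
          have h8 : (1 - tent ε (y - h u)) * (m s(v, w) - m s(v', w')) = 0 := by
            linear_combination h5' - h4'
          rcases mul_eq_zero.mp h8 with h9 | h9
          · have h10 : tent ε (y - h u) = 1 := by linarith
            have h11 : y = h u := by
              have := (tent_near hε hu).1
              rw [h10] at this
              have h12 : |y - h u| / ε = 0 := by linarith
              rcases div_eq_zero_iff.mp h12 with h13 | h13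
              · have := abs_eq_zero.mp h13; linarith
              · linarith
            apply h7
            unfold ReebDrawing.pos
            rw [hDx, Prod.mk.injEq]
            refine ⟨?_, by rw [h11, hau]⟩
            rw [h4', h10]; ring
          · exact hm (by linarith)
        · have hne' : s(a, c) ≠ s(a', c') := by rw [eac, eac']; exact h3
          have hsig : ¬ 0 < (m s(a, c) - m s(a', c')) * (x a - x a') := by
            intro hs
            refine sign_contra hl0 hl1 hs ?_
            rw [eac, eac']
            rw [hcv] at h4'
            rw [hcv'] at h5'
            linear_combination h5' - h4'
          have hRm := (hb a c a' c' hac hac' hne' haa (hau.trans hau'.symm)).resolve_left hsig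
          have hat := (hR a c a' c' hac hac' hne' haa (hau.trans hau'.symm) hRm).resolve_right hsig
          have hut : h u = t := by rw [← hau, hat]
          rw [eac, eac'] at hRm
          refine ⟨hRm, a, c, a', c', eac, eac', hat, by rw [hau', hut], ?_, ?_, ?_⟩
          · rw [← hut]; exact hu
          · rw [← hut]; exact h4'.trans hcv
          · rw [← hut]; exact h5'.trans hcv'
      · exfalso
        have hs := hc a c v' w' hac h2 (by rw [eac]; exact h3) (by rw [hau]; exact hlo)
          (by rw [hau]; exact hhi)
        refine sign_contra hl0 hl1 hs ?_
        rw [eac]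
        rw [hcv] at h4'
        rw [hcv'] at h5'
        linear_combination h5' - h4'
    · rcases crv_level h m x hε hgap v' w' u (hne _ _ h2) y h5 hu with
        ⟨a', c', eac', hau', hcv'⟩ | ⟨hlo', hhi', hcv'⟩
      · exfalso
        have hac' : G.Adj a' c' := by
          have : s(a', c') ∈ G.edgeSet := by rw [eac']; exact h2
          exact this
        have hs := hc a' c' v w hac' h1 (by rw [eac']; exact h3.symm) (by rw [hau']; exact hlo)
          (by rw [hau']; exact hhi)
        refine sign_contra hl0 hl1 hs ?_
        rw [eac']
        rw [hcv] at h4'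
        rw [hcv'] at h5'
        linear_combination h4' - h5'
      · exfalso
        rw [hcv] at h4'
        rw [hcv'] at h5'
        exact hm (h4'.symm.trans h5')
  refine ⟨D, ?_⟩
  unfold ReebDrawing.numCrossings
  have himg : Prod.fst '' D.crossingSet = R := by
    ext q
    constructor
    · rintro ⟨⟨q', p⟩, ⟨v, w, v', w', hq, hcr⟩, rfl⟩
      have := (main _ _ _ _ _ hcr).1
      rw [← hq] at this
      exact this
    · intro hq
      obtain ⟨v, w, v', w', h1, h2, h3, h4, h5, h6, h7, h8⟩ := hR2 q hq
      -- the crossing point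
      set A := m s(v, w) - m s(v', w') with hA
      set B := x v - x v' with hB
      have hA0 : A ≠ 0 := by intro h0; rw [h0] at h8; simp at h8
      have hAB : 0 < A * (A - B) := by nlinarith [mul_self_pos.mpr hA0]
      have hAB0 : A - B ≠ 0 := by intro h0; rw [h0] at hAB; simp at hAB
      set l := A / (A - B) with hl
      have hl0 : 0 < l := by
        have : l = (A * (A - B)) / ((A - B) * (A - B)) := by rw [hl]; field_simp
        rw [this]; exact div_pos hAB (mul_self_pos.mpr hAB0)
      have hl1 : l < 1 := by
        have : 1 - l = (-(A * B) + B * B) / ((A - B) * (A - B)) := by rw [hl]; field_simp; ring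
        have h9 : 0 < 1 - l := by
          rw [this]
          exact div_pos (by nlinarith [mul_self_nonneg B]) (mul_self_pos.mpr hAB0)
        linarith
      have hlAB : (1 - l) * A + l * B = 0 := by rw [hl]; field_simp; ring
      set y := t - ε * (1 - l) with hy
      have hyt : |y - t| = ε * (1 - l) := by
        have : y - t = -(ε * (1 - l)) := by rw [hy]; ring
        rw [this, abs_neg, abs_of_pos (mul_pos hε (by linarith))]
      have hyε : |y - t| < ε := by rw [hyt]; nlinarith
      have htent : tent ε (y - t) = l := by
        rw [(tent_near hε hyε).1, hyt]; field_simp; ring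
      have hw : ∀ v w, G.Adj v w → h v = t → y ∈ Set.uIcc (h v) (h w) ∧
          crv h m x ε s(v, w) y = (1 - l) * m s(v, w) + l * x v := by
        intro v w hvw hv
        have g1 := hgap v w (hne _ _ hvw)
        have g2 : h w ≤ h v := by rw [hv]; exact htmax w
        rw [abs_of_nonneg (by linarith)] at g1
        have g3 : 0 < ε * (1 - l) := mul_pos hε (by linarith)
        have g4 : ε * (1 - l) < ε := by nlinarith
        constructor
        · rw [Set.mem_uIcc]; right
          rw [hv] at g1 ⊢
          constructor <;> rw [hy] <;> linarith
        · rw [crv_eq h m x ε v w hvw.ne, hv, htent, tent_far hε (s := y - h w)]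
          · ring
          · rw [hv] at g1
            refine le_trans ?_ (le_abs_self _)
            rw [hy]; linarith
      refine ⟨(q, (crv h m x ε s(v, w) y, y)), ⟨v, w, v', w', h7, h1, h2, h3, ?_, ?_, ?_⟩, rfl⟩
      · exact ⟨(hw v w h1 h5).1, rfl⟩
      · refine ⟨(hw v' w' h2 h6).1, ?_⟩
        simp only [hDc]
        rw [(hw v w h1 h5).2, (hw v' w' h2 h6).2]
        linear_combination hlAB
      · intro u hu hu' hp
        unfold ReebDrawing.pos at hp
        rw [Prod.mk.injEq] at hp
        have hyu : y = h u := hp.2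
        have h10 : h u = t := by
          by_contra hcon
          have hgv : ∃ z, h z = t := ⟨v, h5⟩
          have := hgap u v (by rw [h5]; exact hcon)
          rw [h5, ← hyu] at this
          linarith
        rw [h10] at hyu
        rw [hyu] at hyt
        simp at hyt
        rcases hyt with h11 | h11
        · linarith
        · linarith
  rw [← himg, Set.InjOn.encard_image]
  rintro ⟨q, p⟩ ⟨v, w, v', w', hq, hcr⟩ ⟨q', p'⟩ ⟨v1, w1, v1', w1', hq', hcr'⟩ hqq
  simp only at hq hq' hqq hcr hcr'
  subst hqq
  rw [hq] at hq'
  have hcr2 : D.IsCrossing p' v w v' w' := by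
    rw [Sym2.eq_iff] at hq'
    rcases hq' with ⟨e1, e2⟩ | ⟨e1, e2⟩
    · exact isCrossing_congr D e1.symm e2.symm hcr'
    · exact isCrossing_symm D (isCrossing_congr D e2.symm e1.symm hcr')
  obtain ⟨-, a, c, a', c', e1, e2, g1, g2, g3, g4, g5⟩ := main _ _ _ _ _ hcr
  obtain ⟨-, b, d, b', d', e1', e2', g1', g2', g3', g4', g5'⟩ := main _ _ _ _ _ hcr2
  have hm := ha v w v' w' hcr.1 hcr.2.1 hcr.2.2.1
  have uniq : ∀ a c b d v w, G.Adj v w → s(a, c) = s(v, w) → s(b, d) = s(v, w) → h a = t →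
      h b = t → a = b := by
    intro a c b d v w hvw k1 k2 k3 k4
    have hbd : G.Adj a c := by
      have : s(a, c) ∈ G.edgeSet := by rw [k1]; exact hvw
      exact this
    rw [← k2, Sym2.eq_iff] at k1
    rcases k1 with ⟨k5, k6⟩ | ⟨k5, k6⟩
    · exact k5
    · exfalso; apply hne a c hbd; rw [k3, k6, k4]
  have hab := uniq a c b d v w hcr.1 e1 e1' g1 g1'
  have hab' := uniq a' c' b' d' v' w' hcr.2.1 e2 e2' g2 g2'
  rw [← hab] at g4'
  rw [← hab'] at g5'
  set A := m s(v, w) - m s(v', w')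
  have hA : A ≠ 0 := sub_ne_zero.mpr hm
  have k1 : (1 - tent ε (p.2 - t)) * A + tent ε (p.2 - t) * (x a - x a') = 0 := by
    simp only [A]; linear_combination g5 - g4
  have k2 : (1 - tent ε (p'.2 - t)) * A + tent ε (p'.2 - t) * (x a - x a') = 0 := by
    simp only [A]; linear_combination g5' - g4'
  have k3 : tent ε (p.2 - t) = tent ε (p'.2 - t) := by
    have : (tent ε (p.2 - t) - tent ε (p'.2 - t)) * A = 0 := by
      linear_combination (-tent ε (p'.2 - t)) * k1 + tent ε (p.2 - t) * k2
    rcases mul_eq_zero.mp this with h | h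
    · linarith
    · exact absurd h hA
  have k4 : p.1 = p'.1 := by rw [g4, g4', k3]
  have k5 : |p.2 - t| = |p'.2 - t| := by
    have i1 := (tent_near hε g3).1
    have i2 := (tent_near hε g3').1
    have i3 : |p.2 - t| / ε = |p'.2 - t| / ε := by linarith
    field_simp at i3
    exact i3
  have le1 : ∀ p, D.IsCrossing p v w v' w' → p.2 ≤ t := by
    intro p hp
    have := hp.2.2.2.1.1
    rw [Set.mem_uIcc] at this
    rcases this with ⟨_, h⟩ | ⟨_, h⟩
    · exact h.trans (htmax _)
    · exact h.trans (htmax _)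
  have l1 := le1 p hcr
  have l2 := le1 p' hcr2
  rw [abs_of_nonpos (by linarith), abs_of_nonpos (by linarith)] at k5
  have k6 : p.2 = p'.2 := by linarith
  rw [Prod.mk.injEq]
  exact ⟨rfl, Prod.ext k4 k6⟩

end ReebFold

namespace ReebFold

/-- position of stage `s` after folding the cycle -/
def slot (k s : ℕ) : ℤ := if 2 * s ≤ 3 * k + 1 then 2 * s - 2 else 6 * k + 1 - 2 * s

/-- column of stage `s`, time `y` -/
def col (n k s : ℕ) (y : ℤ) : ℤ :=
  if 2 * s ≤ 3 * k + 1 then (4 * n + 1) * slot k s + y else (4 * n + 1) * slot k s - y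

lemma col_lt {n k s s' : ℕ} {y y' : ℤ} (hs : slot k s < slot k s') (h0 : 0 ≤ y) (h1 : y ≤ 2 * n)
    (h0' : 0 ≤ y') (h1' : y' ≤ 2 * n) : col n k s y < col n k s' y' := by
  have h2 : (4 * (n : ℤ) + 1) * (slot k s + 1) ≤ (4 * n + 1) * slot k s' :=
    mul_le_mul_of_nonneg_left (by omega) (by positivity)
  unfold col
  split_ifs <;> linarith

lemma slot_inj {k s s' : ℕ} (h : slot k s = slot k s') : s = s' := by
  unfold slot at h
  split_ifs at h <;> omega

lemma col_inj {n k s s' : ℕ} {y y' : ℤ} (h : col n k s y = col n k s' y') (h0 : 0 ≤ y)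
    (h1 : y ≤ 2 * n) (h0' : 0 ≤ y') (h1' : y' ≤ 2 * n) : s = s' ∧ y = y' := by
  have hs : slot k s = slot k s' := by
    rcases lt_trichotomy (slot k s) (slot k s') with h2 | h2 | h2
    · have := col_lt (n := n) h2 h0 h1 h0' h1'; omega
    · exact h2
    · have := col_lt (n := n) h2 h0' h1' h0 h1; omega
  have hss := slot_inj hs
  subst hss
  refine ⟨rfl, ?_⟩
  unfold col at h
  split_ifs at h <;> linarith

/-- order inside a common stage -/
lemma col_same {n k s : ℕ} {y y' : ℤ} (h : y < y') :
    (2 * s ≤ 3 * k + 1 ∧ col n k s y < col n k s y') ∨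
    (¬ 2 * s ≤ 3 * k + 1 ∧ col n k s y' < col n k s y) := by
  unfold col
  split_ifs with h1
  · left; exact ⟨h1, by linarith⟩
  · right; exact ⟨h1, by linarith⟩

/-- The stage data along a cyclic sequence starting at a last top vertex. -/
structure Fold (n k : ℕ) (Tp Bt : ℕ → Prop) (σ z : ℕ → ℕ) : Prop where
  hn : 3 ≤ n
  hk : 1 ≤ k
  s0 : σ 0 = 1
  sn : σ n = 3 * k + 1
  mono : Monotone σ
  top : ∀ j, Tp (j + 1) → z (j + 1) % 3 = 0 ∧ (σ j = z (j + 1) ∨ σ j + 1 = z (j + 1)) ∧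
    (σ (j + 1) = z (j + 1) ∨ σ (j + 1) = z (j + 1) + 1)
  bot : ∀ j, Bt (j + 1) → σ (j + 1) % 3 = 2 ∧ (σ j = σ (j + 1) ∨ σ j + 1 = σ (j + 1))
  zn : ∀ j, ¬ Tp j → z j = σ j
  mid : ∀ j, ¬ Tp (j + 1) → ¬ Bt (j + 1) → σ (j + 1) = σ j
  noT : ∀ j, Tp j → ¬ Tp (j + 1)
  noB : ∀ j, Bt j → ¬ Bt (j + 1)
  TB : ∀ j, Tp j → ¬ Bt j
  T0 : Tp 0
  Tn : Tp n
  zlast : z n = 3 * k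

/-- edge `e` (from `e` to `e+1`) is incident to vertex `j ∈ [1,n]` -/
def Inc (n e j : ℕ) : Prop := e < n ∧ (j = e + 1 ∨ (j = e ∧ 1 ≤ e) ∨ (e = 0 ∧ j = n))

namespace Fold

variable {n k : ℕ} {Tp Bt : ℕ → Prop} {σ z : ℕ → ℕ}

lemma sig_range (H : Fold n k Tp Bt σ z) {e : ℕ} (he : e < n) : 1 ≤ σ e ∧ σ e ≤ 3 * k := by
  have h1 := H.mono (Nat.zero_le e)
  rw [H.s0] at h1
  refine ⟨h1, ?_⟩
  have hn := H.hn
  obtain ⟨p, rfl⟩ : ∃ p, n = p + 1 := ⟨n - 1, by omega⟩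
  have h2 := H.mono (show e ≤ p by omega)
  have h3 := H.top p H.Tn
  have h4 := H.sn
  have h5 := H.zlast
  omega

lemma z_range (H : Fold n k Tp Bt σ z) {j : ℕ} (h1 : 1 ≤ j) (h2 : j ≤ n) :
    1 ≤ z j ∧ z j ≤ 3 * k := by
  obtain ⟨p, rfl⟩ : ∃ p, j = p + 1 := ⟨j - 1, by omega⟩
  by_cases ht : Tp (p + 1)
  · have h3 := H.top p ht
    have h4 := H.sig_range (show p < n by omega)
    omega
  · have hpn : p + 1 ≠ n := by rintro rfl; exact ht H.Tn
    rw [H.zn _ ht]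
    exact H.sig_range (by omega)

lemma m_inj (H : Fold n k Tp Bt σ z) {e f : ℕ} (he : e < n) (hf : f < n) (hef : e ≠ f) :
    col n k (σ e) (2 * e + 1) ≠ col n k (σ f) (2 * f + 1) := by
  intro h
  have := col_inj h (by omega) (by omega) (by omega) (by omega)
  omega

lemma x_inj (H : Fold n k Tp Bt σ z) {i j : ℕ} (hi : i ≤ n) (hj : j ≤ n) (hij : i ≠ j) :
    col n k (z i) (2 * i) ≠ col n k (z j) (2 * j) := by
  intro h
  have := col_inj h (by omega) (by omega) (by omega) (by omega)
  omega

lemma mx_ne (H : Fold n k Tp Bt σ z) {e j : ℕ} (he : e < n) (hj : j ≤ n) :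
    col n k (σ e) (2 * e + 1) ≠ col n k (z j) (2 * j) := by
  intro h
  have := col_inj h (by omega) (by omega) (by omega) (by omega)
  omega

lemma inc_mid (H : Fold n k Tp Bt σ z) {e j : ℕ} (hI : Inc n e j) (ht : ¬ Tp j) (hb : ¬ Bt j) :
    col n k (σ e) (2 * e + 1) = col n k (z j) (2 * j) + 1 ∨
    col n k (σ e) (2 * e + 1) = col n k (z j) (2 * j) - 1 := by
  have key : σ e = z j ∧ (j = e + 1 ∨ j = e) := by
    rcases hI with ⟨hen, rfl | ⟨rfl, h1⟩ | ⟨rfl, rfl⟩⟩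
    · rw [H.zn _ ht, H.mid _ ht hb]; simp
    · rw [H.zn _ ht]; simp
    · exact absurd H.Tn ht
  rw [key.1]
  unfold col
  rcases key.2 with h | h <;> split_ifs <;> subst h <;> push_cast <;> [right; left; left; right] <;>
    ring

lemma mul_pos_cases {a b c d : ℤ} (h : (a < b ∧ c < d) ∨ (b < a ∧ d < c)) :
    0 < (a - b) * (c - d) := by
  rcases h with ⟨h1, h2⟩ | ⟨h1, h2⟩
  · exact mul_pos_of_neg_of_neg (by omega) (by omega)
  · exact mul_pos (by omega) (by omega)

/-- vertex strictly inside the height range of an edge -/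
lemma pass (H : Fold n k Tp Bt σ z) {e j f : ℕ} (hI : Inc n e j) (hj : j ≤ n) (hf : f < n)
    (hef : e ≠ f) (ht : ¬ Tp j) (hb : ¬ Bt j) :
    0 < (col n k (σ e) (2 * e + 1) - col n k (σ f) (2 * f + 1)) *
      (col n k (z j) (2 * j) - col n k (σ f) (2 * f + 1)) := by
  have h1 := H.inc_mid hI ht hb
  have h2 := H.m_inj hI.1 hf hef
  have h3 := H.mx_ne hf hj
  apply mul_pos_cases
  omega

/-- two vertices of the same intermediate level -/
lemma level_mid (H : Fold n k Tp Bt σ z) {e j f l : ℕ} (hI : Inc n e j) (hj : j ≤ n)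
    (hI' : Inc n f l) (hl : l ≤ n) (hef : e ≠ f) (hjl : j ≠ l)
    (ht : ¬ Tp j) (hb : ¬ Bt j) (ht' : ¬ Tp l) (hb' : ¬ Bt l) :
    0 < (col n k (σ e) (2 * e + 1) - col n k (σ f) (2 * f + 1)) *
      (col n k (z j) (2 * j) - col n k (z l) (2 * l)) := by
  have h1 := H.inc_mid hI ht hb
  have h1' := H.inc_mid hI' ht' hb'
  have h2 := H.m_inj hI.1 hI'.1 hef
  have h3 := H.mx_ne hI'.1 hj
  have h3' := H.mx_ne hI.1 hl
  have h4 := H.x_inj hj hl hjl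
  apply mul_pos_cases
  omega

/-- two bottom vertices, ordered in time -/
lemma level_bot_lt (H : Fold n k Tp Bt σ z) {e j f l : ℕ} (hI : Inc n e j)
    (hI' : Inc n f l) (hjl : j < l) (hj1 : 1 ≤ j) (hl : l ≤ n)
    (hb : Bt j) (hb' : Bt l) :
    0 < (col n k (σ e) (2 * e + 1) - col n k (σ f) (2 * f + 1)) *
      (col n k (z j) (2 * j) - col n k (z l) (2 * l)) := by
  have hjn : ¬ Tp j := fun h => H.TB _ h hb
  have hln : ¬ Tp l := fun h => H.TB _ h hb'
  have hlN : l ≠ n := by rintro rfl; exact hln H.Tn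
  have hjl2 : l ≠ j + 1 := by rintro rfl; exact H.noB _ hb hb'
  have hjN : j ≠ n := by omega
  obtain ⟨p, rfl⟩ : ∃ p, j = p + 1 := ⟨j - 1, by omega⟩
  obtain ⟨q, rfl⟩ : ∃ q, l = q + 1 := ⟨l - 1, by omega⟩
  have b1 := H.bot p hb
  have b2 := H.bot q hb'
  have m1 := H.mono (show p + 1 ≤ q by omega)
  rw [H.zn _ hjn, H.zn _ hln]
  have he : e = p ∨ e = p + 1 := by have := hI.2; omega
  have hf : f = q ∨ f = q + 1 := by have := hI'.2; omega
  have hse : σ e = σ (p + 1) ∨ (e = p ∧ σ e + 1 = σ (p + 1)) := by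
    rcases he with rfl | rfl <;> omega
  have hen := hI.1
  have hfn := hI'.1
  apply mul_pos_cases
  by_cases hs : σ (p + 1) = σ (q + 1)
  · have hsf : σ f = σ (p + 1) := by rcases hf with rfl | rfl <;> omega
    rw [hsf, ← hs]
    have c1 := col_same (n := n) (k := k) (s := σ (p + 1))
      (show (2 * ((p + 1 : ℕ) : ℤ)) < 2 * ((q + 1 : ℕ) : ℤ) by omega)
    rcases hse with hse | ⟨hep, hse⟩
    · rw [hse]
      have c2 := col_same (n := n) (k := k) (s := σ (p + 1))
        (show (2 * (e : ℤ) + 1) < 2 * (f : ℤ) + 1 by omega)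
      omega
    · have c2 : (2 * σ (p + 1) ≤ 3 * k + 1 ∧ slot k (σ e) < slot k (σ (p + 1))) ∨
        (¬ 2 * σ (p + 1) ≤ 3 * k + 1 ∧ slot k (σ (p + 1)) < slot k (σ e)) := by
        unfold slot
        split_ifs <;> omega
      rcases c2 with ⟨c3, c4⟩ | ⟨c3, c4⟩
      · have := col_lt (n := n) (y := 2 * (e : ℤ) + 1) (y' := 2 * (f : ℤ) + 1) c4
          (by omega) (by omega) (by omega) (by omega)
        omega
      · have := col_lt (n := n) (y' := 2 * (e : ℤ) + 1) (y := 2 * (f : ℤ) + 1) c4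
          (by omega) (by omega) (by omega) (by omega)
        omega
  · have hsf : σ f = σ (q + 1) ∨ σ f + 1 = σ (q + 1) := by rcases hf with rfl | rfl <;> omega
    have hse' : σ e = σ (p + 1) ∨ σ e + 1 = σ (p + 1) := by omega
    have hqr := H.sig_range (show q + 1 < n by omega)
    have hpr := H.sig_range (show e < n by omega)
    have m2 : σ (p + 1) < σ (q + 1) := by omega
    have c2 : (slot k (σ e) < slot k (σ f) ∧ slot k (σ (p + 1)) < slot k (σ (q + 1))) ∨
        (slot k (σ f) < slot k (σ e) ∧ slot k (σ (q + 1)) < slot k (σ (p + 1))) := by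
      unfold slot
      split_ifs <;> omega
    rcases c2 with ⟨c3, c4⟩ | ⟨c3, c4⟩
    · left
      exact ⟨col_lt c3 (by omega) (by omega) (by omega) (by omega),
        col_lt c4 (by omega) (by omega) (by omega) (by omega)⟩
    · right
      exact ⟨col_lt c3 (by omega) (by omega) (by omega) (by omega),
        col_lt c4 (by omega) (by omega) (by omega) (by omega)⟩

lemma level_bot (H : Fold n k Tp Bt σ z) {e j f l : ℕ} (hI : Inc n e j)
    (hI' : Inc n f l) (hjl : j ≠ l) (hj1 : 1 ≤ j) (hj : j ≤ n) (hl1 : 1 ≤ l) (hl : l ≤ n)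
    (hb : Bt j) (hb' : Bt l) :
    0 < (col n k (σ e) (2 * e + 1) - col n k (σ f) (2 * f + 1)) *
      (col n k (z j) (2 * j) - col n k (z l) (2 * l)) := by
  rcases lt_or_gt_of_ne hjl with h | h
  · exact H.level_bot_lt hI hI' h hj1 hl hb hb'
  · have := H.level_bot_lt hI' hI h hl1 hj hb' hb
    linarith

/-- slots at a top vertex -/
lemma top_slot (H : Fold n k Tp Bt σ z) {e j : ℕ} (hI : Inc n e j) (hj1 : 1 ≤ j) (hj : j ≤ n)
    (ht : Tp j) :
    (∃ i : ℤ, 0 ≤ i ∧ i < k ∧ slot k (z j) = 3 * i + 1) ∧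
    ((σ e = z j ∧ slot k (σ e) = slot k (z j)) ∨ slot k (σ e) = slot k (z j) - 2 ∨
      slot k (σ e) = slot k (z j) + 2 ∨
      (slot k (z j) = 1 ∧ slot k (σ e) = 0) ∨
      (slot k (z j) = 3 * k - 2 ∧ slot k (σ e) = slot k (z j) + 1)) := by
  obtain ⟨p, rfl⟩ : ∃ p, j = p + 1 := ⟨j - 1, by omega⟩
  obtain ⟨t1, t2, t3⟩ := H.top p ht
  have hz := H.z_range hj1 hj
  have hk := H.hk
  have hn := H.hn
  obtain ⟨hen, hI⟩ := hI
  have hser := H.sig_range hen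
  obtain ⟨c, hc⟩ : ∃ c, z (p + 1) = 3 * c := ⟨z (p + 1) / 3, by omega⟩
  constructor
  · by_cases h2 : 2 * c ≤ k
    · refine ⟨2 * c - 1, ?_, ?_, ?_⟩
      · omega
      · omega
      · rw [hc]; unfold slot; split_ifs <;> omega
    · refine ⟨2 * (k - c), ?_, ?_, ?_⟩
      · omega
      · omega
      · rw [hc]; unfold slot; split_ifs <;> omega
  · have hs : σ e = z (p + 1) ∨ σ e + 1 = z (p + 1) ∨ (σ e = z (p + 1) + 1) ∨
        (σ e = 1 ∧ z (p + 1) = 3 * k) := by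
      rcases hI with h | ⟨h, -⟩ | ⟨h, h'⟩
      · have : e = p := by omega
        subst this; omega
      · subst h; omega
      · right; right; right
        rw [h, H.s0, h', H.zlast]; simp
    rw [hc] at hs ⊢
    rcases hs with h | h | h | ⟨h, h'⟩
    · left; rw [h]; simp
    · right
      have : σ e = 3 * c - 1 := by omega
      rw [this]
      unfold slot; split_ifs <;> omega
    · right
      rw [h]
      unfold slot; split_ifs <;> omega
    · right
      rw [h]
      unfold slot; split_ifs <;> omega

/-- tops in the same cluster, ordered in time -/
lemma level_top_same (H : Fold n k Tp Bt σ z) {e j f l : ℕ} (hI : Inc n e j)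
    (hI' : Inc n f l) (hjl : j < l) (hj1 : 1 ≤ j) (hl : l ≤ n)
    (ht : Tp j) (ht' : Tp l) (hz : z j = z l) :
    0 < (col n k (σ e) (2 * e + 1) - col n k (σ f) (2 * f + 1)) *
      (col n k (z j) (2 * j) - col n k (z l) (2 * l)) := by
  have hjl2 : l ≠ j + 1 := by rintro rfl; exact H.noT _ ht ht'
  obtain ⟨p, rfl⟩ : ∃ p, j = p + 1 := ⟨j - 1, by omega⟩
  obtain ⟨q, rfl⟩ : ∃ q, l = q + 1 := ⟨l - 1, by omega⟩
  have b1 := H.top p ht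
  have b2 := H.top q ht'
  have m1 := H.mono (show p + 1 ≤ q by omega)
  rw [← hz] at b2 ⊢
  have hzr := H.z_range hj1 (by omega)
  set Z := z (p + 1) with hZ
  have he : e = p ∨ e = p + 1 := by have := hI.2; omega
  have hse : σ e = Z ∨ (σ e + 1 = Z) := by
    rcases he with rfl | rfl <;> omega
  have hen := hI.1
  have hfn := hI'.1
  have hf : (e < f ∧ (σ f = Z ∨ σ f = Z + 1)) ∨ (f = 0 ∧ σ f = 1 ∧ Z = 3 * k) := by
    rcases hI'.2 with h | ⟨h, -⟩ | ⟨h, h'⟩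
    · have : f = q := by omega
      subst this; left; omega
    · subst h; left; omega
    · right
      have := H.zlast
      rw [← h', ← hz] at this
      rw [h, H.s0]; exact ⟨rfl, rfl, this⟩
  have c1 := col_same (n := n) (k := k) (s := Z)
      (show (2 * ((p + 1 : ℕ) : ℤ)) < 2 * ((q + 1 : ℕ) : ℤ) by omega)
  apply mul_pos_cases
  by_cases hsame : σ e = Z ∧ e < f ∧ σ f = Z
  · obtain ⟨g1, g2, g3⟩ := hsame
    rw [g1, g3]
    have c2 := col_same (n := n) (k := k) (s := Z)
        (show (2 * (e : ℤ) + 1) < 2 * (f : ℤ) + 1 by omega)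
    omega
  · have hk := H.hk
    have c2 : (2 * Z ≤ 3 * k + 1 ∧ slot k (σ e) < slot k (σ f)) ∨
        (¬ 2 * Z ≤ 3 * k + 1 ∧ slot k (σ f) < slot k (σ e)) := by
        unfold slot
        split_ifs <;> omega
    rcases c2 with ⟨c3, c4⟩ | ⟨c3, c4⟩
    · have := col_lt (n := n) (y := 2 * (e : ℤ) + 1) (y' := 2 * (f : ℤ) + 1) c4
          (by omega) (by omega) (by omega) (by omega)
      omega
    · have := col_lt (n := n) (y' := 2 * (e : ℤ) + 1) (y := 2 * (f : ℤ) + 1) c4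
          (by omega) (by omega) (by omega) (by omega)
      omega

/-- tops in different clusters -/
lemma level_top_diff (H : Fold n k Tp Bt σ z) {e j f l : ℕ} (hI : Inc n e j)
    (hI' : Inc n f l) (hj1 : 1 ≤ j) (hj : j ≤ n) (hl1 : 1 ≤ l) (hl : l ≤ n)
    (ht : Tp j) (ht' : Tp l) (hz : slot k (z j) < slot k (z l)) :
    0 < (col n k (σ e) (2 * e + 1) - col n k (σ f) (2 * f + 1)) *
      (col n k (z j) (2 * j) - col n k (z l) (2 * l)) ∨
    ∃ i : ℕ, i + 1 < k ∧ slot k (σ e) = 3 * i + 3 ∧ slot k (σ f) = 3 * i + 2 := by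
  obtain ⟨⟨i, i0, i1, hi⟩, hs⟩ := H.top_slot hI hj1 hj ht
  obtain ⟨⟨i', i0', i1', hi'⟩, hs'⟩ := H.top_slot hI' hl1 hl ht'
  have hen := hI.1
  have hfn := hI'.1
  by_cases hrev : slot k (σ e) < slot k (σ f)
  · left
    apply mul_pos_cases
    left
    exact ⟨col_lt hrev (by omega) (by omega) (by omega) (by omega),
        col_lt hz (by omega) (by omega) (by omega) (by omega)⟩
  · right
    refine ⟨i.toNat, ?_, ?_, ?_⟩ <;> omega

lemma level_top (H : Fold n k Tp Bt σ z) {e j f l : ℕ} (hI : Inc n e j)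
    (hI' : Inc n f l) (hjl : j ≠ l) (hj1 : 1 ≤ j) (hj : j ≤ n) (hl1 : 1 ≤ l) (hl : l ≤ n)
    (ht : Tp j) (ht' : Tp l) :
    0 < (col n k (σ e) (2 * e + 1) - col n k (σ f) (2 * f + 1)) *
      (col n k (z j) (2 * j) - col n k (z l) (2 * l)) ∨
    ∃ i : ℕ, i + 1 < k ∧ ((slot k (σ e) = 3 * i + 3 ∧ slot k (σ f) = 3 * i + 2) ∨
      (slot k (σ e) = 3 * i + 2 ∧ slot k (σ f) = 3 * i + 3)) := by
  rcases lt_trichotomy (slot k (z j)) (slot k (z l)) with h | h | h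
  · rcases H.level_top_diff hI hI' hj1 hj hl1 hl ht ht' h with h1 | ⟨i, h1, h2⟩
    · exact Or.inl h1
    · exact Or.inr ⟨i, h1, Or.inl h2⟩
  · left
    have hz := slot_inj h
    rcases lt_or_gt_of_ne hjl with h' | h'
    · exact H.level_top_same hI hI' h' hj1 hl ht ht' hz
    · have := H.level_top_same hI' hI h' hl1 hj ht' ht hz.symm
      linarith
  · rcases H.level_top_diff hI' hI hl1 hl hj1 hj ht' ht h with h1 | ⟨i, h1, h2, h3⟩
    · left; linarith
    · exact Or.inr ⟨i, h1, Or.inr ⟨h3, h2⟩⟩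

/-- reversed pairs are really reversed -/
lemma rev (H : Fold n k Tp Bt σ z) {e j f l i : ℕ} (hI : Inc n e j)
    (hI' : Inc n f l) (hj1 : 1 ≤ j) (hj : j ≤ n) (hl1 : 1 ≤ l) (hl : l ≤ n)
    (ht : Tp j) (ht' : Tp l) (hi : i + 1 < k) (he : slot k (σ e) = 3 * i + 2)
    (hf : slot k (σ f) = 3 * i + 3) :
    j ≠ l ∧ (col n k (σ e) (2 * e + 1) - col n k (σ f) (2 * f + 1)) *
      (col n k (z j) (2 * j) - col n k (z l) (2 * l)) < 0 := by
  obtain ⟨⟨i, i0, i1, hi⟩, hs⟩ := H.top_slot hI hj1 hj ht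
  obtain ⟨⟨i', i0', i1', hi'⟩, hs'⟩ := H.top_slot hI' hl1 hl ht'
  have hen := hI.1
  have hfn := hI'.1
  have hz : slot k (z l) < slot k (z j) := by omega
  refine ⟨by rintro rfl; omega, ?_⟩
  have h1 := col_lt (n := n) (y := 2 * (e : ℤ) + 1) (y' := 2 * (f : ℤ) + 1)
    (show slot k (σ e) < slot k (σ f) by omega) (by omega) (by omega) (by omega) (by omega)
  have h2 := col_lt (n := n) (y := 2 * (l : ℤ)) (y' := 2 * (j : ℤ))
    hz (by omega) (by omega) (by omega) (by omega)
  exact mul_neg_of_neg_of_pos (by omega) (by omega)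

/-- the edge touches the top level -/
def Touch (Tp : ℕ → Prop) (e : ℕ) : Prop := Tp e ∨ Tp (e + 1)

lemma touch_unique (H : Fold n k Tp Bt σ z) {e f : ℕ} (hs : σ e = σ f) (h3 : σ e % 3 ≠ 0)
    (he : Touch Tp e) (hf : Touch Tp f) : e = f := by
  have key : ∀ {e f : ℕ}, σ e = σ f → σ e % 3 ≠ 0 → Touch Tp e → Touch Tp f → ¬ e < f := by
    intro e f hs h3 he hf hlt
    have hef : σ f % 3 ≠ 0 := by omega
    by_cases h1 : σ e % 3 = 1
    · have hTf : Tp f := by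
        rcases hf with h | h
        · exact h
        · have := H.top f h; omega
      obtain ⟨p, rfl⟩ : ∃ p, f = p + 1 := ⟨f - 1, by omega⟩
      have := H.top p hTf
      have := H.mono (show e ≤ p by omega)
      omega
    · have hTe : Tp (e + 1) := by
        rcases he with h | h
        · rcases e with _ | p
          · have := H.s0; omega
          · have := H.top p h; omega
        · exact h
      have := H.top e hTe
      have := H.mono (show e + 1 ≤ f by omega)
      omega
  have k1 := key hs h3 he hf
  have k2 := key hs.symm (by omega) hf he
  omega

lemma touch_exists (H : Fold n k Tp Bt σ z) {s : ℕ} (h1 : 1 ≤ s) (h2 : s ≤ 3 * k)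
    (h3 : s % 3 ≠ 0) : ∃ e, e < n ∧ σ e = s ∧ Touch Tp e := by
  classical
  have hn := H.hn
  by_cases hm : s % 3 = 1
  · have hex : ∃ j, s ≤ σ j := ⟨n, by rw [H.sn]; omega⟩
    have hsp := Nat.find_spec hex
    have hmin := fun j (hj : j < Nat.find hex) => Nat.find_min hex hj
    have hle : Nat.find hex ≤ n := Nat.find_min' hex (by rw [H.sn]; omega)
    generalize Nat.find hex = j at hsp hmin hle
    rcases j with _ | p
    · exact ⟨0, by omega, by have := H.s0; omega, Or.inl H.T0⟩
    · have hp := hmin p (by omega)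
      by_cases hT : Tp (p + 1)
      · have ht := H.top p hT
        have hs : σ (p + 1) = s := by omega
        refine ⟨p + 1, ?_, hs, Or.inl hT⟩
        by_contra hc
        have : p + 1 = n := by omega
        rw [this, H.sn] at hs
        omega
      · by_cases hB : Bt (p + 1)
        · have := H.bot p hB; omega
        · have := H.mid p hT hB; omega
  · have hex : ∃ j, s < σ j := ⟨n, by rw [H.sn]; omega⟩
    have hsp := Nat.find_spec hex
    have hmin := fun j (hj : j < Nat.find hex) => Nat.find_min hex hj
    have hle : Nat.find hex ≤ n := Nat.find_min' hex (by rw [H.sn]; omega)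
    generalize Nat.find hex = j at hsp hmin hle
    rcases j with _ | p
    · have := H.s0; omega
    · have hp := hmin p (by omega)
      by_cases hT : Tp (p + 1)
      · have ht := H.top p hT
        have hs : σ p = s := by omega
        exact ⟨p, by omega, hs, Or.inr hT⟩
      · by_cases hB : Bt (p + 1)
        · have := H.bot p hB; omega
        · have := H.mid p hT hB; omega

lemma touch_slot_unique (H : Fold n k Tp Bt σ z) {e f : ℕ} (he' : e < n) (hs : slot k (σ e) = slot k (σ f))
    (h3 : slot k (σ e) % 3 ≠ 1)
    (he : Touch Tp e) (hf : Touch Tp f) : e = f := by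
  refine H.touch_unique (slot_inj hs) ?_ he hf
  have := H.sig_range he'
  intro h
  apply h3
  obtain ⟨c, hc⟩ : ∃ c, σ e = 3 * c := ⟨σ e / 3, by omega⟩
  rw [hc]
  unfold slot; split_ifs <;> omega

lemma touch_slot_exists (H : Fold n k Tp Bt σ z) {p : ℕ} (h2 : p < 3 * k)
    (h3 : p % 3 ≠ 1) : ∃ e, e < n ∧ slot k (σ e) = p ∧ Touch Tp e := by
  by_cases hp : p % 2 = 0
  · obtain ⟨e, h4, h5, h6⟩ := H.touch_exists (s := (p + 2) / 2) (by omega) (by omega) (by omega)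
    refine ⟨e, h4, ?_, h6⟩
    rw [h5]; unfold slot; split_ifs <;> omega
  · obtain ⟨e, h4, h5, h6⟩ := H.touch_exists (s := (6 * k + 1 - p) / 2) (by omega) (by omega)
      (by omega)
    refine ⟨e, h4, ?_, h6⟩
    rw [h5]; unfold slot; split_ifs <;> omega

end Fold

end ReebFold

namespace ReebFold

open Classical in
/-- the stage of the edge `j` -/
noncomputable def stage (Tp Bt L : ℕ → Prop) : ℕ → ℕ
  | 0 => 1
  | j + 1 =>
    if Tp (j + 1) then
      (if L (j + 1) then 3 * ((stage Tp Bt L j + 2) / 3) + 1 else 3 * ((stage Tp Bt L j + 2) / 3))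
    else if Bt (j + 1) then 3 * (stage Tp Bt L j / 3) + 2 else stage Tp Bt L j

open Classical in
/-- the stage of the vertex `j` -/
noncomputable def vstage (Tp Bt L : ℕ → Prop) (j : ℕ) : ℕ :=
  if Tp j ∧ L j then stage Tp Bt L j - 1 else stage Tp Bt L j

open Classical in
lemma fold_exists (n k : ℕ) (hn : 3 ≤ n) (Tp Bt L : ℕ → Prop)
    (hLB : ∀ j, Bt (j + 1) → L j) (hLT : ∀ j, Tp (j + 1) → ¬ L j)
    (hLm : ∀ j, ¬ Tp (j + 1) → ¬ Bt (j + 1) → (L j ↔ L (j + 1)))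
    (noT : ∀ j, Tp j → ¬ Tp (j + 1)) (noB : ∀ j, Bt j → ¬ Bt (j + 1))
    (TB : ∀ j, Tp j → ¬ Bt j) (T0 : Tp 0) (L0 : L 0) (Tn : Tp n) (Ln : L n)
    (hk : k = ((Finset.range n).filter fun j => Tp j ∧ L j).card) :
    Fold n k Tp Bt (stage Tp Bt L) (vstage Tp Bt L) := by
  have step : ∀ j, stage Tp Bt L (j + 1) = if Tp (j + 1) then
      (if L (j + 1) then 3 * ((stage Tp Bt L j + 2) / 3) + 1 else 3 * ((stage Tp Bt L j + 2) / 3))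
    else if Bt (j + 1) then 3 * (stage Tp Bt L j / 3) + 2 else stage Tp Bt L j := fun j => rfl
  have s0 : stage Tp Bt L 0 = 1 := rfl
  have inv : ∀ j, (stage Tp Bt L j % 3 = 1 → L j) ∧ (stage Tp Bt L j % 3 = 0 → ¬ L j) := by
    intro j
    induction j with
    | zero => rw [s0]; exact ⟨fun _ => L0, by simp⟩
    | succ j ih =>
      rw [step]
      split_ifs with h1 h2 h3
      · exact ⟨fun _ => h2, by omega⟩
      · exact ⟨by omega, fun _ => h2⟩
      · exact ⟨by omega, by omega⟩
      · rw [← hLm j h1 h3]; exact ih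
  have topmod : ∀ j, Tp (j + 1) → stage Tp Bt L j % 3 ≠ 1 :=
    fun j h h1 => hLT j h ((inv j).1 h1)
  have botmod : ∀ j, Bt (j + 1) → stage Tp Bt L j % 3 ≠ 0 :=
    fun j h h1 => (inv j).2 h1 (hLB j h)
  have count : ∀ j, ((Finset.range (j + 1)).filter fun j => Tp j ∧ L j).card
      = (stage Tp Bt L j + 2) / 3 := by
    intro j
    induction j with
    | zero => rw [s0]; simp [Finset.filter_singleton, T0, L0]
    | succ j ih =>
      rw [Finset.range_add_one, Finset.filter_insert, step]
      by_cases h1 : Tp (j + 1)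
      · have := topmod j h1
        by_cases h2 : L (j + 1)
        · rw [if_pos ⟨h1, h2⟩, if_pos h1, if_pos h2, Finset.card_insert_of_notMem (by simp), ih]
          omega
        · rw [if_neg (by tauto), if_pos h1, if_neg h2, ih]
          omega
      · rw [if_neg (by tauto), if_neg h1, ih]
        split_ifs with h3
        · have := botmod j h3
          omega
        · rfl
  obtain ⟨p, rfl⟩ : ∃ p, n = p + 1 := ⟨n - 1, by omega⟩
  have sn : stage Tp Bt L (p + 1) = 3 * k + 1 := by
    have h1 := count (p + 1)
    rw [Finset.range_add_one, Finset.filter_insert, if_pos ⟨Tn, Ln⟩,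
      Finset.card_insert_of_notMem (by simp), ← hk, step, if_pos Tn, if_pos Ln] at h1
    rw [step, if_pos Tn, if_pos Ln]
    omega
  refine ⟨hn, ?_, s0, sn, ?_, ?_, ?_, ?_, ?_, noT, noB, TB, T0, Tn, ?_⟩
  · rw [hk]
    apply Finset.card_pos.mpr
    exact ⟨0, by simp [T0, L0]⟩
  · apply monotone_nat_of_le_succ
    intro j
    have := topmod j
    have := botmod j
    rw [step]
    split_ifs with h1 h2 h3 <;> omega
  · intro j hj
    have := topmod j hj
    unfold vstage
    rw [step, if_pos hj]
    by_cases h2 : L (j + 1)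
    · rw [if_pos h2, if_pos ⟨hj, h2⟩]; omega
    · rw [if_neg h2, if_neg (by tauto)]; omega
  · intro j hj
    have := botmod j hj
    rw [step, if_neg (fun h => TB _ h hj), if_pos hj]
    omega
  · intro j hj
    unfold vstage
    rw [if_neg (by tauto)]
  · intro j h1 h2
    rw [step, if_neg h1, if_neg h2]
  · unfold vstage
    rw [if_pos ⟨Tn, Ln⟩, sn]; omega

/-- transfer to a cyclic sequence of vertices -/
theorem transfer {V : Type*} [Fintype V] (G : SimpleGraph V) (h : V → ℝ)
    (hne : ∀ v w : V, G.Adj v w → h v ≠ h w) (t b : ℝ) (htmax : ∀ v, h v ≤ t)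
    (hbmin : ∀ v, b ≤ h v)
    (n k : ℕ) (u : ℕ → V) (hu : ∀ i j, u i = u j ↔ i ≡ j [MOD n])
    (hsurj : ∀ v, ∃ j, 1 ≤ j ∧ j ≤ n ∧ u j = v)
    (hadj : ∀ j, G.Adj (u j) (u (j + 1)))
    (hadj' : ∀ v w, G.Adj v w → ∃ j, j < n ∧ s(v, w) = s(u j, u (j + 1)))
    (σ z : ℕ → ℕ)
    (H : Fold n k (fun j => h (u j) = t) (fun j => h (u j) = b) σ z) :
    ∃ D : ReebDrawing G h, D.numCrossings = ((k - 1 : ℕ) : ℕ∞) := by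
  classical
  have hn := H.hn
  choose J hJ1 hJn hJu using hsurj
  have hex : ∀ e : Sym2 V, ∃ j, e ∈ G.edgeSet → j < n ∧ e = s(u j, u (j + 1)) := by
    intro e
    by_cases he : e ∈ G.edgeSet
    · induction e with
      | _ v w =>
        obtain ⟨j, hj⟩ := hadj' v w he
        exact ⟨j, fun _ => hj⟩
    · exact ⟨0, fun h => absurd h he⟩
  choose idx hidx using hex
  have small : ∀ {i j : ℕ}, i ≡ j [MOD n] → i < n → j < n → i = j := by
    intro i j hij hi hj
    exact Nat.ModEq.eq_of_lt_of_lt hij hi hj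
  have small' : ∀ {i j : ℕ}, i ≡ j [MOD n] → 1 ≤ i → i ≤ n → 1 ≤ j → j ≤ n → i = j := by
    intro i j hij hi hi' hj hj'
    obtain ⟨i, rfl⟩ : ∃ p, i = p + 1 := ⟨i - 1, by omega⟩
    obtain ⟨j, rfl⟩ : ∃ p, j = p + 1 := ⟨j - 1, by omega⟩
    have := small (Nat.ModEq.add_right_cancel' 1 hij) (by omega) (by omega)
    omega
  have Einj : ∀ {i j : ℕ}, s(u i, u (i + 1)) = s(u j, u (j + 1)) → i < n → j < n → i = j := by
    intro i j hij hi hj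
    rw [Sym2.eq_iff] at hij
    rcases hij with ⟨h1, -⟩ | ⟨h1, h2⟩
    · exact small ((hu _ _).1 h1) hi hj
    · exfalso
      have h1 := (hu _ _).1 h1
      have h2 := (hu _ _).1 h2
      have h3 : j + 2 ≡ j + 0 [MOD n] := (h1.symm.add_right 1).trans h2
      have h4 := Nat.ModEq.add_left_cancel' j h3
      have := small h4 (by omega) (by omega)
      omega
  have idxE : ∀ {i}, i < n → idx s(u i, u (i + 1)) = i := by
    intro i hi
    obtain ⟨h1, h2⟩ := hidx s(u i, u (i + 1)) (hadj i)
    exact (Einj h2 hi h1).symm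
  have inc : ∀ v w, G.Adj v w → Inc n (idx s(v, w)) (J v) := by
    intro v w hvw
    obtain ⟨h1, h2⟩ := hidx s(v, w) hvw
    refine ⟨h1, ?_⟩
    have hv : v = u (idx s(v, w)) ∨ v = u (idx s(v, w) + 1) := by
      rw [Sym2.eq_iff] at h2; tauto
    rcases hv with hv | hv
    · have h3 : u (J v) = u (idx s(v, w)) := by rw [hJu]; exact hv
      have h3 := (hu _ _).1 h3
      by_cases h4 : 1 ≤ idx s(v, w)
      · right; left
        exact ⟨small' h3 (hJ1 v) (hJn v) h4 h1.le, h4⟩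
      · right; right
        have h5 : idx s(v, w) = 0 := by omega
        refine ⟨h5, ?_⟩
        rw [h5] at h3
        have h6 : J v ≡ n [MOD n] := h3.trans (by simp [Nat.ModEq])
        exact small' h6 (hJ1 v) (hJn v) (by omega) le_rfl
    · have h3 : u (J v) = u (idx s(v, w) + 1) := by rw [hJu]; exact hv
      left
      exact small' ((hu _ _).1 h3) (hJ1 v) (hJn v) (by omega) (by omega)
  have idxne : ∀ v w v' w', G.Adj v w → G.Adj v' w' → s(v, w) ≠ s(v', w') →
      idx s(v, w) ≠ idx s(v', w') := by
    intro v w v' w' h1 h2 h3 h4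
    apply h3
    rw [(hidx s(v, w) h1).2, (hidx s(v', w') h2).2, h4]
  have Jne : ∀ v v', v ≠ v' → J v ≠ J v' := by
    intro v v' h1 h2
    apply h1
    rw [← hJu v, h2, hJu]
  have touch : ∀ v w, G.Adj v w → h v = t → Fold.Touch (fun j => h (u j) = t) (idx s(v, w)) := by
    intro v w hvw hv
    rcases (inc v w hvw).2 with h1 | ⟨h1, -⟩ | ⟨h1, -⟩
    · right; change h (u (idx s(v, w) + 1)) = t; rw [← h1, hJu]; exact hv
    · left; change h (u (idx s(v, w))) = t; rw [← h1, hJu]; exact hv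
    · left; rw [h1]; exact H.T0
  set M : ℕ → ℤ := fun e => col n k (σ e) (2 * e + 1) with hM
  set X : ℕ → ℤ := fun j => col n k (z j) (2 * j) with hX
  set R : Set (Sym2 (Sym2 V)) := {q | ∃ i, i + 1 < k ∧ ∃ e f, e < n ∧ f < n ∧
    Fold.Touch (fun j => h (u j) = t) e ∧ Fold.Touch (fun j => h (u j) = t) f ∧
    slot k (σ e) = 3 * (i : ℤ) + 2 ∧ slot k (σ f) = 3 * (i : ℤ) + 3 ∧
    q = s(s(u e, u (e + 1)), s(u f, u (f + 1)))} with hR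
  have hb : ∀ v w v' w', G.Adj v w → G.Adj v' w' → s(v, w) ≠ s(v', w') → v ≠ v' → h v = h v' →
      0 < (M (idx s(v, w)) - M (idx s(v', w'))) * (X (J v) - X (J v')) ∨
      (h v = t ∧ s(s(v, w), s(v', w')) ∈ R) := by
    intro v w v' w' h1 h2 h3 h4 h5
    have i1 := inc v w h1
    have i2 := inc v' w' h2
    have hj := Jne v v' h4
    by_cases ht : h v = t
    · rcases H.level_top i1 i2 hj (hJ1 v) (hJn v) (hJ1 v') (hJn v') (by simp only [hJu]; exact ht)
        (by simp only [hJu]; rw [← h5]; exact ht) with h6 | ⟨i, hi, h6⟩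
      · left; exact h6
      · right
        refine ⟨ht, ?_⟩
        have e1 := hidx s(v, w) h1
        have e2 := hidx s(v', w') h2
        have t1 := touch v w h1 ht
        have t2 := touch v' w' h2 (by rw [← h5]; exact ht)
        rcases h6 with ⟨h6, h7⟩ | ⟨h6, h7⟩
        · refine ⟨i, hi, _, _, e2.1, e1.1, t2, t1, h7, h6, ?_⟩
          rw [← e1.2, ← e2.2]; exact Sym2.eq_swap
        · refine ⟨i, hi, _, _, e1.1, e2.1, t1, t2, h6, h7, ?_⟩
          rw [← e1.2, ← e2.2]
    · left
      by_cases hbv : h v = b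
      · exact H.level_bot i1 i2 hj (hJ1 v) (hJn v) (hJ1 v') (hJn v')
          (by simp only [hJu]; exact hbv) (by simp only [hJu]; rw [← h5]; exact hbv)
      · exact H.level_mid i1 (hJn v) i2 (hJn v') (idxne _ _ _ _ h1 h2 h3) hj
          (by simp only [hJu]; exact ht) (by simp only [hJu]; exact hbv)
          (by simp only [hJu]; rw [← h5]; exact ht) (by simp only [hJu]; rw [← h5]; exact hbv)
  have hRcard : R.encard = ((k - 1 : ℕ) : ℕ∞) := by
    have hex : ∀ i : Fin (k - 1), ∃ e f, e < n ∧ f < n ∧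
        Fold.Touch (fun j => h (u j) = t) e ∧ Fold.Touch (fun j => h (u j) = t) f ∧
        slot k (σ e) = 3 * ((i : ℕ) : ℤ) + 2 ∧ slot k (σ f) = 3 * ((i : ℕ) : ℤ) + 3 := by
      intro i
      have hi := i.2
      obtain ⟨e, e1, e2, e3⟩ := H.touch_slot_exists (p := 3 * i + 2) (by omega) (by omega)
      obtain ⟨f, f1, f2, f3⟩ := H.touch_slot_exists (p := 3 * i + 3) (by omega) (by omega)
      exact ⟨e, f, e1, f1, e3, f3, by rw [e2]; push_cast; rfl, by rw [f2]; push_cast; rfl⟩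
    choose E F hE hF tE tF sE sF using hex
    have hRr : R = Set.range
        (fun i : Fin (k - 1) => s(s(u (E i), u (E i + 1)), s(u (F i), u (F i + 1)))) := by
      ext q
      constructor
      · rintro ⟨i, hi, e, f, he, hf, te, tf, se, sf, rfl⟩
        have k1 := H.touch_slot_unique he (f := E ⟨i, by omega⟩) (by rw [se, sE])
          (by rw [se]; omega) te (tE _)
        have k2 := H.touch_slot_unique hf (f := F ⟨i, by omega⟩) (by rw [sf, sF])
          (by rw [sf]; omega) tf (tF _)
        exact ⟨⟨i, by omega⟩, by simp only; rw [← k1, ← k2]⟩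
      · rintro ⟨i, rfl⟩
        have hi := i.2
        exact ⟨i, by omega, E i, F i, hE i, hF i, tE i, tF i, sE i, sF i, rfl⟩
    have hinj : Function.Injective
        (fun i : Fin (k - 1) => s(s(u (E i), u (E i + 1)), s(u (F i), u (F i + 1)))) := by
      intro i j hij
      simp only at hij
      rw [Sym2.eq_iff] at hij
      have hi := sE i
      have hj := sE j
      have hj' := sF j
      rcases hij with ⟨h1, -⟩ | ⟨h1, -⟩
      · have := Einj h1 (hE i) (hE j)
        rw [this] at hi
        ext; omega
      · have := Einj h1 (hE i) (hF j)
        rw [this] at hi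
        omega
    rw [hRr, ← Set.image_univ, hinj.encard_image, Set.encard_univ]
    simp
  rw [← hRcard]
  have cast_pos : ∀ {a c : ℤ}, 0 < a * c → (0 : ℝ) < (a : ℝ) * (c : ℝ) := by
    intro a c hac; exact_mod_cast hac
  refine geom G h hne t htmax (fun e => (M (idx e) : ℝ)) (fun v => (X (J v) : ℝ)) R
    ?_ ?_ ?_ ?_ ?_ ?_
  · intro v v' h1 _ h3
    exact H.x_inj (hJn v) (hJn v') (Jne _ _ h1) (by exact_mod_cast h3)
  · intro v w v' w' h1 h2 h3 h4
    exact H.m_inj (inc v w h1).1 (inc v' w' h2).1 (idxne _ _ _ _ h1 h2 h3) (by exact_mod_cast h4)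
  · intro v w v' w' h1 h2 h3 h4 h5
    rcases hb v w v' w' h1 h2 h3 h4 h5 with h6 | h6
    · left; exact_mod_cast h6
    · right; exact h6.2
  · intro v w v' w' h1 h2 h3 h4 h5
    have ht : h v ≠ t := by
      have := max_le (htmax v') (htmax w'); intro h6; linarith
    have hbv : h v ≠ b := by
      have := le_min (hbmin v') (hbmin w'); intro h6; linarith
    have := H.pass (inc v w h1) (hJn v) (inc v' w' h2).1 (idxne _ _ _ _ h1 h2 h3)
      (by simp only [hJu]; exact ht) (by simp only [hJu]; exact hbv)
    exact_mod_cast this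
  · intro v w v' w' h1 h2 h3 h4 h5 _
    rcases hb v w v' w' h1 h2 h3 h4 h5 with h6 | h6
    · right; exact_mod_cast h6
    · left; exact h6.1
  · rintro q ⟨i, hi, e, f, he, hf, te, tf, se, sf, rfl⟩
    have rep : ∀ e, e < n → Fold.Touch (fun j => h (u j) = t) e →
        ∃ v w, G.Adj v w ∧ s(v, w) = s(u e, u (e + 1)) ∧ h v = t ∧ idx s(v, w) = e := by
      intro e he te
      rcases te with te | te
      · exact ⟨_, _, hadj e, rfl, te, idxE he⟩
      · exact ⟨_, _, (hadj e).symm, Sym2.eq_swap, te, by rw [Sym2.eq_swap]; exact idxE he⟩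
    obtain ⟨v, w, a1, a2, a3, a4⟩ := rep e he te
    obtain ⟨v', w', b1, b2, b3, b4⟩ := rep f hf tf
    have i1 := inc v w a1
    have i2 := inc v' w' b1
    rw [a4] at i1
    rw [b4] at i2
    have hrev := H.rev i1 i2 (hJ1 v) (hJn v) (hJ1 v') (hJn v') (by simp only [hJu]; exact a3)
      (by simp only [hJu]; exact b3) hi se sf
    refine ⟨v, w, v', w', a1, b1, ?_, ?_, a3, b3, by rw [a2, b2], ?_⟩
    · intro hc
      rw [a2, b2] at hc
      have := Einj hc he hf
      rw [this, sf] at se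
      omega
    · rintro rfl; exact hrev.1 rfl
    · simp only [a4, b4]
      exact_mod_cast hrev.2

lemma exists_last_top (Tp Bt : ℕ → Prop) (TB : ∀ j, Tp j → ¬ Bt j) :
    ∀ d p, Tp p → Bt (p + d) → ∃ r, Tp r ∧ ∃ d, 0 < d ∧ Bt (r + d) ∧
      ∀ d', 0 < d' → d' < d → ¬ Tp (r + d') ∧ ¬ Bt (r + d') := by
  intro d
  induction d using Nat.strong_induction_on with
  | _ d ih =>
    intro p hp hb
    have hd : 0 < d := by
      rcases Nat.eq_zero_or_pos d with h | h
      · subst h; exact absurd hb (TB _ hp)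
      · exact h
    by_cases h1 : ∃ d', 0 < d' ∧ d' < d ∧ (Tp (p + d') ∨ Bt (p + d'))
    · obtain ⟨d', h2, h3, h4 | h4⟩ := h1
      · exact ih (d - d') (by omega) (p + d') h4 (by rwa [show p + d' + (d - d') = p + d by omega])
      · exact ih d' h3 p hp h4
    · push Not at h1
      exact ⟨p, hp, d, hd, hb, fun d' h2 h3 => h1 d' h2 h3⟩

end ReebFold

/-- Let `(G, h)` be a Reeb graph (in particular, adjacent vertices
have distinct heights, so that edges can be drawn `y`-monotonically) such that `G` is
a cycle, and let `k` be the top-down iteration number of the cycle with respect to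
`h`: with `t` the maximum and `b` the minimum height on the cycle, `k` is the number
of alternations between reaching a top vertex and subsequently reaching a bottom
vertex while traversing the cycle; equivalently, `k` counts the vertices of height
`t` whose next vertex of extremal height (`t` or `b`) along the cyclic order has
height `b`. Then there exists a drawing of `(G, h)` with exactly `k - 1` crossings. -/
theorem cycle_drawing_top_down_iteration
    {V : Type*} [Fintype V] (G : SimpleGraph V) (h : V → ℝ)
    (n : ℕ) (hn : 3 ≤ n) (e : Fin n ≃ V) (hcyc : IsCycleEnum G e)
    (hne : ∀ v w : V, G.Adj v w → h v ≠ h w)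
    (t b : ℝ)
    (htmax : ∀ v : V, h v ≤ t) (htmem : ∃ v : V, h v = t)
    (hbmin : ∀ v : V, b ≤ h v) (hbmem : ∃ v : V, h v = b)
    (k : ℕ)
    (hk : k = Set.ncard {i : Fin n |
      h (e i) = t ∧
      ∃ d : ℕ, 0 < d ∧ d ≤ n ∧
        h (cycVert (by omega) e (i.val + d)) = b ∧
        ∀ d' : ℕ, 0 < d' → d' < d →
          h (cycVert (by omega) e (i.val + d')) ≠ t ∧
          h (cycVert (by omega) e (i.val + d')) ≠ b}) :
    ∃ D : ReebDrawing G h, D.numCrossings = ((k - 1 : ℕ) : ℕ∞) := by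
  classical
  have hn0 : 0 < n := by omega
  set c : ℕ → V := fun m => cycVert hn0 e m with hc
  have hcc : ∀ i j, c i = c j ↔ i ≡ j [MOD n] := by
    intro i j
    simp only [hc, cycVert, EmbeddingLike.apply_eq_iff_eq, Fin.mk.injEq]
    rfl
  have cval : ∀ i : Fin n, e i = c i.val := by
    intro i
    simp only [hc, cycVert, EmbeddingLike.apply_eq_iff_eq]
    ext; exact (Nat.mod_eq_of_lt i.2).symm
  have hadj : ∀ j, G.Adj (c j) (c (j + 1)) := by
    intro j
    simp only [hc, cycVert]
    rw [hcyc]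
    left
    simp
  have htb : b ≠ t := by
    intro htb
    apply hne _ _ (hadj 0)
    have h1 := htmax (c 0)
    have h2 := htmax (c (0 + 1))
    have h3 := hbmin (c 0)
    have h4 := hbmin (c (0 + 1))
    linarith
  -- the starting vertex
  obtain ⟨r, hrT, hrL⟩ : ∃ r, h (c r) = t ∧ ∃ d, 0 < d ∧ h (c (r + d)) = b ∧
      ∀ d', 0 < d' → d' < d → ¬ h (c (r + d')) = t ∧ ¬ h (c (r + d')) = b := by
    obtain ⟨v, hv⟩ := htmem
    obtain ⟨w, hw⟩ := hbmem
    obtain ⟨i, rfl⟩ := e.surjective v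
    obtain ⟨j, rfl⟩ := e.surjective w
    rw [cval] at hv hw
    have hi := i.2
    refine ReebFold.exists_last_top (fun m => h (c m) = t) (fun m => h (c m) = b)
      (fun m h1 h2 => htb (h2.symm.trans h1)) (n - i.val + j.val) i.val hv ?_
    have : c (i.val + (n - i.val + j.val)) = c j.val := by
      rw [hcc, show i.val + (n - i.val + j.val) = n + j.val by omega]
      simp [Nat.ModEq]
    simp only [this]; exact hw
  set u : ℕ → V := fun j => c (r + j) with hu
  have huu : ∀ i j, u i = u j ↔ i ≡ j [MOD n] := by
    intro i j
    simp only [hu]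
    rw [hcc]
    exact ⟨fun h => Nat.ModEq.add_left_cancel' r h, fun h => h.add_left r⟩
  have uper : ∀ j, u (j + n) = u j := by
    intro j; rw [huu]; simp [Nat.ModEq]
  have hsurj' : ∀ m, ∃ j, j < n ∧ u j = c m := by
    intro m
    refine ⟨(m + (n * r - r)) % n, Nat.mod_lt _ hn0, ?_⟩
    simp only [hu]
    rw [hcc]
    have h1 : r + (m + (n * r - r)) % n ≡ r + (m + (n * r - r)) [MOD n] :=
      (Nat.mod_modEq _ _).add_left r
    have h2 : r ≤ n * r := Nat.le_mul_of_pos_left r hn0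
    rw [show r + (m + (n * r - r)) = m + n * r by omega] at h1
    exact h1.trans (by simp [Nat.ModEq])
  have hsurj : ∀ v, ∃ j, 1 ≤ j ∧ j ≤ n ∧ u j = v := by
    intro v
    obtain ⟨i, rfl⟩ := e.surjective v
    obtain ⟨j, hj, hj'⟩ := hsurj' i.val
    rw [cval, ← hj']
    rcases Nat.eq_zero_or_pos j with h0 | h0
    · exact ⟨n, by omega, le_rfl, by rw [h0, ← uper 0, Nat.zero_add]⟩
    · exact ⟨j, h0, hj.le, rfl⟩
  have hadj2 : ∀ v w, G.Adj v w → ∃ j, j < n ∧ s(v, w) = s(u j, u (j + 1)) := by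
    have key : ∀ i j : Fin n, (i.val + 1) % n = j.val →
        ∃ l, l < n ∧ s(e i, e j) = s(u l, u (l + 1)) := by
      intro i j hij
      obtain ⟨l, hl, hl'⟩ := hsurj' i.val
      refine ⟨l, hl, ?_⟩
      have h2 : c j.val = u (l + 1) := by
        simp only [hu] at hl' ⊢
        rw [hcc] at hl' ⊢
        rw [← hij]
        exact (Nat.mod_modEq _ _).trans (hl'.symm.add_right 1)
      rw [cval i, cval j, hl', h2]
    intro v w hvw
    obtain ⟨i, rfl⟩ := e.surjective v
    obtain ⟨j, rfl⟩ := e.surjective w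
    rw [hcyc] at hvw
    rcases hvw with h1 | h1
    · exact key i j h1
    · obtain ⟨l, hl, hl'⟩ := key j i h1
      exact ⟨l, hl, by rw [← hl']; exact Sym2.eq_swap⟩
  set L : ℕ → Prop := fun j => ∃ d, 0 < d ∧ h (u (j + d)) = b ∧
      ∀ d', 0 < d' → d' < d → ¬ h (u (j + d')) = t ∧ ¬ h (u (j + d')) = b with hL
  have noadj : ∀ j, h (u j) ≠ h (u (j + 1)) := fun j => hne _ _ (hadj (r + j))
  have hkk : k = ((Finset.range n).filter fun j => h (u j) = t ∧ L j).card := by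
    rw [hk, ← Set.ncard_coe_finset]
    symm
    refine Set.ncard_congr (fun j _ => (⟨(r + j) % n, Nat.mod_lt _ hn0⟩ : Fin n)) ?_ ?_ ?_
    · intro j hj
      simp only [Finset.coe_filter, Finset.mem_range, Set.mem_setOf_eq] at hj ⊢
      obtain ⟨hjn, hjt, d, hd0, hdb, hd⟩ := hj
      have hcm : ∀ d, cycVert hn0 e ((r + j) % n + d) = u (j + d) := by
        intro d
        change c ((r + j) % n + d) = c (r + (j + d))
        rw [hcc, ← Nat.add_assoc]
        exact (Nat.mod_modEq _ _).add_right d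
      refine ⟨hjt, d, hd0, ?_, ?_, ?_⟩
      · by_contra hcon
        have h1 := (hd (d - n) (by omega) (by omega)).2
        apply h1
        rw [← uper, show j + (d - n) + n = j + d by omega]
        exact hdb
      · rw [hcm]; exact hdb
      · intro d' h1 h2
        rw [hcm]; exact hd d' h1 h2
    · intro i j hi hj hij
      simp only [Finset.coe_filter, Finset.mem_range, Set.mem_setOf_eq] at hi hj
      simp only [Fin.mk.injEq] at hij
      exact Nat.ModEq.eq_of_lt_of_lt (Nat.ModEq.add_left_cancel' r hij) hi.1 hj.1
    · rintro i ⟨hit, d, hd0, -, hdb, hd⟩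
      obtain ⟨j, hj, hj'⟩ := hsurj' i.val
      have hmod : r + j ≡ i.val [MOD n] := (hcc _ _).1 hj'
      have hcm : ∀ d, cycVert hn0 e (i.val + d) = u (j + d) := by
        intro d
        change c (i.val + d) = c (r + (j + d))
        rw [hcc, ← Nat.add_assoc]
        exact hmod.symm.add_right d
      refine ⟨j, ?_, ?_⟩
      · simp only [Finset.coe_filter, Finset.mem_range, Set.mem_setOf_eq]
        refine ⟨hj, by rw [hj', ← cval]; exact hit, d, hd0, ?_, ?_⟩
        · rw [← hcm]; exact hdb
        · intro d' h1 h2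
          rw [← hcm]; exact hd d' h1 h2
      · ext
        change (r + j) % n = i.val
        rw [hmod, Nat.mod_eq_of_lt i.2]
  have L0 : L 0 := by
    obtain ⟨d, h1, h2, h3⟩ := hrL
    refine ⟨d, h1, ?_, ?_⟩
    · rw [Nat.zero_add]; exact h2
    · intro d' h4 h5; rw [Nat.zero_add]; exact h3 d' h4 h5
  have Ln : L n := by
    obtain ⟨d, h1, h2, h3⟩ := L0
    have hp : ∀ d, u (n + d) = u (0 + d) := by
      intro d; rw [Nat.add_comm n d, uper, Nat.zero_add]
    refine ⟨d, h1, ?_, ?_⟩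
    · rw [hp]; exact h2
    · intro d' h4 h5; rw [hp]; exact h3 d' h4 h5
  have hT0 : h (u 0) = t := hrT
  have hTn : h (u n) = t := by rw [← Nat.zero_add n, uper]; exact hT0
  have H := ReebFold.fold_exists n k hn (fun j => h (u j) = t) (fun j => h (u j) = b) L
    (fun j hj => ⟨1, one_pos, hj, fun d' h1 h2 => by omega⟩)
    (by
      rintro j hj ⟨d, h1, h2, h3⟩
      by_cases hd : d = 1
      · subst hd; exact htb (h2.symm.trans hj)
      · exact (h3 1 one_pos (by omega)).1 hj)
    (by
      intro j hjt hjb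
      constructor
      · rintro ⟨d, h1, h2, h3⟩
        have hd : d ≠ 1 := by rintro rfl; exact hjb h2
        refine ⟨d - 1, by omega, ?_, ?_⟩
        · rw [show j + 1 + (d - 1) = j + d by omega]; exact h2
        · intro d' h4 h5
          rw [show j + 1 + d' = j + (d' + 1) by omega]
          exact h3 _ (by omega) (by omega)
      · rintro ⟨d, h1, h2, h3⟩
        refine ⟨d + 1, by omega, ?_, ?_⟩
        · rw [show j + (d + 1) = j + 1 + d by omega]; exact h2
        · intro d' h4 h5
          by_cases hd : d' = 1
          · subst hd; exact ⟨hjt, hjb⟩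
          · rw [show j + d' = j + 1 + (d' - 1) by omega]
            exact h3 _ (by omega) (by omega))
    (fun j h1 h2 => noadj j (h1.trans h2.symm))
    (fun j h1 h2 => noadj j (h1.trans h2.symm))
    (fun j h1 h2 => htb (h2.symm.trans h1))
    hT0 L0 hTn Ln (by rw [hkk])
  exact ReebFold.transfer G h hne t b htmax hbmin n k u huu hsurj
    (fun j => hadj (r + j)) hadj2 _ _ H
end
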